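/- arXiv:2408.17232 — 3 statements merged into one kernel-verified Lean document; each statement's English description precedes it below -/
import Mathlib

section
/- Let c be a real number with 0 < c < 2, and let q : ℕ → ℕ be any sequence with q(n)/n → c as n → ∞. Then the mean number of bridges over bubbles of size q(n) in linear chord diagrams with n chords satisfies b̄(n, q(n)) · (2n) / (q(n)·(2n − q(n))) → 1 as n → ∞; that is, b̄(n,q) is asymptotic to q(2n−q)/(2n) in the limit of large n and q. -/
namespace ChordBubbles

/-- A linear chord diagram with `n` chords: a fixed-point-free involution of `Fin (2*n)`. -/
def IsDiagram (n : ℕ) (f : Equiv.Perm (Fin (2 * n))) : Prop :=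
  (∀ i, f (f i) = i) ∧ ∀ i, f i ≠ i

/-- Vertex `i` is an endpoint of a short chord (a chord joining adjacent vertices). -/
def ShortEnd (n : ℕ) (f : Equiv.Perm (Fin (2 * n))) (i : Fin (2 * n)) : Prop :=
  (f i).val = i.val + 1 ∨ (f i).val + 1 = i.val

/-- `[a, b]` delimits a bubble: a maximal nonempty interval of vertices none of which is an
endpoint of a short chord. -/
def IsBubble (n : ℕ) (f : Equiv.Perm (Fin (2 * n))) (a b : ℕ) : Prop :=
  a ≤ b ∧ b < 2 * n ∧
  (∀ i : Fin (2 * n), a ≤ i.val → i.val ≤ b → ¬ ShortEnd n f i) ∧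
  (a = 0 ∨ ∃ j : Fin (2 * n), j.val + 1 = a ∧ ShortEnd n f j) ∧
  (b + 1 = 2 * n ∨ ∃ j : Fin (2 * n), j.val = b + 1 ∧ ShortEnd n f j)

/-- The size (number of vertices) of the bubble `[a, b]`. -/
def bubbleSize (a b : ℕ) : ℕ := b + 1 - a

/-- The number of bridges of the bubble `[a, b]` under the diagram `f`: the number of chords
joining a vertex inside the bubble to one outside it. -/
noncomputable def bridges (n : ℕ) (f : Equiv.Perm (Fin (2 * n))) (a b : ℕ) : ℕ :=
  Nat.card {i : Fin (2 * n) // (a ≤ i.val ∧ i.val ≤ b) ∧ ¬ (a ≤ (f i).val ∧ (f i).val ≤ b)}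

/-- `N n q b` : the number of pairs (diagram, bubble) where the diagram has `n` chords and the
bubble has size `q` and exactly `b` bridges. -/
noncomputable def N (n q b : ℕ) : ℕ :=
  Nat.card {p : Equiv.Perm (Fin (2 * n)) × ℕ × ℕ //
    IsDiagram n p.1 ∧ IsBubble n p.1 p.2.1 p.2.2 ∧
    bubbleSize p.2.1 p.2.2 = q ∧ bridges n p.1 p.2.1 p.2.2 = b}

/-- The mean number of bridges over all bubbles of size `q` in diagrams with `n` chords. -/
noncomputable def meanBridges (n q : ℕ) : ℝ :=
  (∑ b ∈ Finset.range (2 * n + 1), (b : ℝ) * N n q b) /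
  (∑ b ∈ Finset.range (2 * n + 1), (N n q b : ℝ))

/-!
Cut two chords `{x, f x}` and `{y, f y}` of a diagram `f` and rejoin their ends as `{x, y}` and
`{f x, f y}`. If the first chord lies inside a bubble `A` and the second one outside `A`, away from
the two vertices bordering `A`, this keeps `A` a bubble and yields two bridges of `A`; conversely,
two bridges whose inner ends are not adjacent are turned into such a pair of chords. If `A` has `q`
vertices and `β` bridges, there are `(q - β) (2n - q - β) + O(q)` choices of (oriented) pairs of the
first kind and `β² + O(q)` of the second kind. The difference of these two main terms is linear
in `β`, namely `q (2n - q) - 2n β`, so equating the totals over all bubbles of size `q` determines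
the mean of `β` up to `O(q / n)`.
-/

open Finset
open Equiv (Perm swap)

section Reconnect

variable {α : Type*} [DecidableEq α] {f : Perm α} {x y z : α}

/-- The involution obtained from `f` by replacing the chords `{x, f x}` and `{y, f y}` by
`{x, y}` and `{f x, f y}`, encoded as a conjugate of `f` by a transposition. -/
def reconnect (f : Perm α) (x y : α) : Perm α :=
  swap (f x) y * f * swap (f x) y

lemma reconnect_apply (f : Perm α) (x y z : α) :
    reconnect f x y z = swap (f x) y (f (swap (f x) y z)) := rfl

lemma involutive_reconnect (hf : Function.Involutive f) (x y : α) :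
    Function.Involutive (reconnect f x y) := fun z => by
  simp only [reconnect_apply, Equiv.swap_apply_self, hf _]

lemma reconnect_apply_ne (hf : ∀ z, f z ≠ z) (x y z : α) : reconnect f x y z ≠ z := fun h =>
  hf _ <| (swap (f x) y).injective <| by rwa [Equiv.swap_apply_self]

lemma reconnect_apply_left (hx : f x ≠ x) (hxy : x ≠ y) : reconnect f x y x = y := by
  rw [reconnect_apply, Equiv.swap_apply_of_ne_of_ne hx.symm hxy, Equiv.swap_apply_left]

lemma reconnect_apply_apply_left (hy : f y ≠ y) (hxy : x ≠ y) : reconnect f x y (f x) = f y := by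
  rw [reconnect_apply, Equiv.swap_apply_left,
    Equiv.swap_apply_of_ne_of_ne (f.injective.ne hxy.symm) hy]

lemma reconnect_apply_of_ne (hf : Function.Involutive f) (hzx : z ≠ x) (hzy : z ≠ y)
    (hzfx : z ≠ f x) (hzfy : z ≠ f y) : reconnect f x y z = f z := by
  rw [reconnect_apply, Equiv.swap_apply_of_ne_of_ne hzfx hzy,
    Equiv.swap_apply_of_ne_of_ne (f.injective.ne hzx)]
  exact fun h => hzfy (hf.eq_iff.mp h)

lemma reconnect_reconnect (hx : f x ≠ x) (hxy : x ≠ y) :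
    reconnect (reconnect f x y) x (f x) = f := by
  ext z
  simp only [reconnect_apply (reconnect f x y), reconnect_apply_left hx hxy]
  simp only [reconnect_apply, Equiv.swap_comm y, Equiv.swap_apply_self]

end Reconnect

section ChordEnds

variable {α : Type*} [DecidableEq α] {f : Perm α} {A B : Finset α} {x : α}

/-- The ends of the chords of `f` that lie within `A`. -/
def innerEnds (f : Perm α) (A : Finset α) : Finset α := {x ∈ A | f x ∈ A}

/-- The ends in `A` of the chords of `f` that leave `A`, one for each bridge of `A`. -/
def bridgeEnds (f : Perm α) (A : Finset α) : Finset α := {x ∈ A | f x ∉ A}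

@[simp]
lemma mem_innerEnds : x ∈ innerEnds f A ↔ x ∈ A ∧ f x ∈ A := mem_filter

@[simp]
lemma mem_bridgeEnds : x ∈ bridgeEnds f A ↔ x ∈ A ∧ f x ∉ A := mem_filter

lemma card_innerEnds_add_card_bridgeEnds (f : Perm α) (A : Finset α) :
    #(innerEnds f A) + #(bridgeEnds f A) = #A :=
  card_filter_add_card_filter_not _

lemma innerEnds_mono (f : Perm α) (h : A ⊆ B) : innerEnds f A ⊆ innerEnds f B := fun x hx => by
  rw [mem_innerEnds] at hx ⊢
  exact ⟨h hx.1, h hx.2⟩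

lemma card_innerEnds_le (f : Perm α) (A B : Finset α) :
    #(innerEnds f A) ≤ #(innerEnds f B) + 2 * #(A \ B) := by
  have hsub : innerEnds f A ⊆ innerEnds f B ∪ (A \ B ∪ (A \ B).map f.symm.toEmbedding) := by
    intro x
    simp only [mem_innerEnds, mem_union, mem_sdiff, mem_map_equiv, Equiv.symm_symm]
    tauto
  calc #(innerEnds f A)
      ≤ #(innerEnds f B ∪ (A \ B ∪ (A \ B).map f.symm.toEmbedding)) := card_le_card hsub
    _ ≤ #(innerEnds f B) + (#(A \ B) + #((A \ B).map f.symm.toEmbedding)) :=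
        (card_union_le _ _).trans (Nat.add_le_add_left (card_union_le _ _) _)
    _ = #(innerEnds f B) + 2 * #(A \ B) := by rw [card_map, two_mul]

lemma card_bridgeEnds_compl [Fintype α] (hf : Function.Involutive f) (A : Finset α) :
    #(bridgeEnds f Aᶜ) = #(bridgeEnds f A) := by
  refine card_nbij' f f ?_ ?_ (fun x _ => hf x) (fun x _ => hf x) <;> intro x hx <;>
    simpa [hf x, and_comm] using hx

end ChordEnds

section Intervals

variable {m a b : ℕ} {i j : Fin m}

/-- The vertices in the interval `[a, b]`. -/
def block (m a b : ℕ) : Finset (Fin m) := {i | a ≤ i.val ∧ i.val ≤ b}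

/-- The interval `[a, b]` together with the vertices bordering it, `a - 1` and `b + 1`. -/
def thickBlock (m a b : ℕ) : Finset (Fin m) := {i | a ≤ i.val + 1 ∧ i.val ≤ b + 1}

/-- Two vertices are near if they are equal or adjacent. -/
def Near (i j : Fin m) : Prop := i.val ≤ j.val + 1 ∧ j.val ≤ i.val + 1

instance (i j : Fin m) : Decidable (Near i j) := inferInstanceAs (Decidable (_ ∧ _))

@[simp]
lemma mem_block : i ∈ block m a b ↔ a ≤ i.val ∧ i.val ≤ b := mem_filter_univ i

@[simp]
lemma mem_thickBlock : i ∈ thickBlock m a b ↔ a ≤ i.val + 1 ∧ i.val ≤ b + 1 := mem_filter_univ i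

lemma block_subset_thickBlock (m a b : ℕ) : block m a b ⊆ thickBlock m a b := fun i hi => by
  rw [mem_block] at hi
  rw [mem_thickBlock]
  omega

lemma Near.symm (h : Near i j) : Near j i := And.symm h

lemma mem_thickBlock_of_near (hi : i ∈ block m a b) (h : Near i j) : j ∈ thickBlock m a b := by
  rw [mem_block] at hi
  rw [mem_thickBlock]
  unfold Near at h
  omega

lemma card_block (a : ℕ) (hb : b < m) : #(block m a b) = b + 1 - a := by
  have hmap : (block m a b).map Fin.valEmbedding = Icc a b := by
    ext k
    simp only [mem_map, mem_block, Fin.valEmbedding_apply, mem_Icc]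
    exact ⟨fun ⟨_, hi, hik⟩ => hik ▸ hi, fun hk => ⟨⟨k, by omega⟩, hk, rfl⟩⟩
  rw [← card_map, hmap, Nat.card_Icc]

lemma card_thickBlock_sdiff_block_le (m a b : ℕ) : #(thickBlock m a b \ block m a b) ≤ 2 := by
  have hsub : (thickBlock m a b \ block m a b).map Fin.valEmbedding ⊆ {a - 1, b + 1} := by
    intro k
    simp only [mem_map, mem_sdiff, mem_thickBlock, mem_block, Fin.valEmbedding_apply, mem_insert,
      mem_singleton]
    omega
  rw [← card_map Fin.valEmbedding]
  exact (card_le_card hsub).trans card_le_two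

lemma card_filter_near_le (s : Finset (Fin m)) (i : Fin m) : #{j ∈ s | Near i j} ≤ 3 := by
  have hsub : ({j ∈ s | Near i j}).map Fin.valEmbedding ⊆ Icc (i.val - 1) (i.val + 1) := by
    intro k
    simp only [mem_map, mem_filter, Fin.valEmbedding_apply, mem_Icc]
    rintro ⟨j, ⟨-, hnear⟩, rfl⟩
    unfold Near at hnear
    omega
  rw [← card_map Fin.valEmbedding]
  exact (card_le_card hsub).trans (by rw [Nat.card_Icc]; omega)

end Intervals

section Bubbles

variable {n q a b : ℕ} {f g : Perm (Fin (2 * n))} {x y : Fin (2 * n)}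

lemma bridges_eq_card_bridgeEnds (f : Perm (Fin (2 * n))) (a b : ℕ) :
    bridges n f a b = #(bridgeEnds f (block (2 * n) a b)) := by
  simp only [bridges, ← mem_block, ← mem_bridgeEnds, Nat.card_eq_finsetCard]

lemma IsDiagram.shortEnd_iff_near (hf : IsDiagram n f) : ShortEnd n f x ↔ Near x (f x) := by
  have hne : (f x).val ≠ x.val := Fin.val_injective.ne (hf.2 x)
  unfold ShortEnd Near
  omega

lemma isDiagram_reconnect (hf : IsDiagram n f) (x y : Fin (2 * n)) :
    IsDiagram n (reconnect f x y) :=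
  ⟨involutive_reconnect hf.1 x y, reconnect_apply_ne hf.2 x y⟩

lemma IsDiagram.shortEnd_apply_iff (hf : IsDiagram n f) :
    ShortEnd n f (f x) ↔ ShortEnd n f x := by
  rw [ShortEnd, ShortEnd, hf.1]
  omega

lemma IsBubble.not_shortEnd (hb : IsBubble n f a b) (hx : x ∈ block (2 * n) a b) :
    ¬ ShortEnd n f x :=
  hb.2.2.1 x (mem_block.mp hx).1 (mem_block.mp hx).2

lemma IsBubble.shortEnd_of_mem_thickBlock (hb : IsBubble n f a b)
    (hx : x ∈ thickBlock (2 * n) a b) (hx' : x ∉ block (2 * n) a b) : ShortEnd n f x := by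
  have hborder : x.val + 1 = a ∨ x.val = b + 1 := by
    rw [mem_thickBlock] at hx
    rw [mem_block] at hx'
    omega
  obtain ⟨-, -, -, hleft, hright⟩ := hb
  obtain hxa | hxb := hborder
  · obtain rfl | ⟨j, hj, hshort⟩ := hleft
    · exact absurd hxa (Nat.succ_ne_zero _)
    · rwa [Fin.ext (Nat.succ_injective (hxa.trans hj.symm))]
  · obtain hend | ⟨j, hj, hshort⟩ := hright
    · exact absurd (hxb.trans hend) x.2.ne
    · rwa [Fin.ext (hxb.trans hj.symm)]

lemma IsBubble.apply_notMem_thickBlock (hf : IsDiagram n f) (hb : IsBubble n f a b)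
    (hx : x ∈ block (2 * n) a b) (hfx : f x ∉ block (2 * n) a b) :
    f x ∉ thickBlock (2 * n) a b := fun h =>
  hb.not_shortEnd hx (hf.shortEnd_apply_iff.mp (hb.shortEnd_of_mem_thickBlock h hfx))

lemma IsBubble.of_forall_eq_or_not_shortEnd (hb : IsBubble n f a b)
    (hborder : ∀ j ∈ thickBlock (2 * n) a b, j ∉ block (2 * n) a b → g j = f j)
    (hblock : ∀ i ∈ block (2 * n) a b, g i = f i ∨ ¬ ShortEnd n g i) : IsBubble n g a b := by
  have hshort {i} (h : g i = f i) : ShortEnd n g i ↔ ShortEnd n f i := by simp only [ShortEnd, h]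
  obtain ⟨hab, hbn, hmem, hleft, hright⟩ := hb
  refine ⟨hab, hbn, fun i hai hib => ?_, hleft.imp_right ?_, hright.imp_right ?_⟩
  · obtain heq | hns := hblock i (mem_block.mpr ⟨hai, hib⟩)
    · exact (hshort heq).not.mpr (hmem i hai hib)
    · exact hns
  all_goals
    rintro ⟨j, hj, hjs⟩
    refine ⟨j, hj, (hshort (hborder j ?_ ?_)).mpr hjs⟩
    · rw [mem_thickBlock]; omega
    · rw [mem_block]; omega

lemma isBubble_reconnect (hf : IsDiagram n f) (hb : IsBubble n f a b) (hxy : x ≠ y)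
    (hborder : ∀ z ∈ thickBlock (2 * n) a b, z ∉ block (2 * n) a b →
      z ≠ x ∧ z ≠ y ∧ z ≠ f x ∧ z ≠ f y)
    (hnear : x ∈ block (2 * n) a b ∨ y ∈ block (2 * n) a b → ¬ Near x y)
    (hnear' : f x ∈ block (2 * n) a b ∨ f y ∈ block (2 * n) a b → ¬ Near (f x) (f y)) :
    IsBubble n (reconnect f x y) a b := by
  have hg : IsDiagram n (reconnect f x y) := isDiagram_reconnect hf x y
  have hgx : reconnect f x y x = y := reconnect_apply_left (hf.2 x) hxy
  have hgfx : reconnect f x y (f x) = f y := reconnect_apply_apply_left (hf.2 y) hxy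
  have hgy : reconnect f x y y = x := by
    nth_rw 2 [← hgx]
    exact hg.1 x
  have hgfy : reconnect f x y (f y) = f x := by rw [← hgfx, hg.1]
  refine hb.of_forall_eq_or_not_shortEnd (fun z hz hz' => ?_) (fun z hz => ?_)
  · obtain ⟨hzx, hzy, hzfx, hzfy⟩ := hborder z hz hz'
    exact reconnect_apply_of_ne hf.1 hzx hzy hzfx hzfy
  · rw [or_iff_not_imp_left, hg.shortEnd_iff_near]
    intro hne
    have hz_cases : z = x ∨ z = y ∨ z = f x ∨ z = f y := by
      by_contra! h
      exact hne (reconnect_apply_of_ne hf.1 h.1 h.2.1 h.2.2.1 h.2.2.2)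
    obtain rfl | rfl | rfl | rfl := hz_cases
    · rw [hgx]; exact hnear (.inl hz)
    · rw [hgy]; exact fun h => hnear (.inr hz) h.symm
    · rw [hgfx]; exact hnear' (.inl hz)
    · rw [hgfy]; exact fun h => hnear' (.inr hz) h.symm

open Classical in
/-- The pairs of a diagram with `n` chords and a bubble `[a, b]` of it of size `q`, as triples
`(f, a, b)`. -/
noncomputable def bubbles (n q : ℕ) : Finset (Perm (Fin (2 * n)) × ℕ × ℕ) :=
  {p ∈ univ ×ˢ range (2 * n) ×ˢ range (2 * n) |
    IsDiagram n p.1 ∧ IsBubble n p.1 p.2.1 p.2.2 ∧ bubbleSize p.2.1 p.2.2 = q}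

lemma mem_bubbles {p : Perm (Fin (2 * n)) × ℕ × ℕ} : p ∈ bubbles n q ↔
    IsDiagram n p.1 ∧ IsBubble n p.1 p.2.1 p.2.2 ∧ bubbleSize p.2.1 p.2.2 = q := by
  simp only [bubbles, mem_filter, mem_product, mem_univ, mem_range, true_and,
    and_iff_right_iff_imp]
  exact fun ⟨_, hb, _⟩ => ⟨hb.1.trans_lt hb.2.1, hb.2.1⟩

/-- The inner ends of the bridges of the bubble of `p`. -/
def bubbleBridges (p : Perm (Fin (2 * n)) × ℕ × ℕ) : Finset (Fin (2 * n)) :=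
  bridgeEnds p.1 (block (2 * n) p.2.1 p.2.2)

/-- The pairs consisting of an oriented chord within the bubble of `p` and an oriented chord
avoiding the bubble and the vertices bordering it; a chord is oriented by the choice of an end. -/
def splitChordPairs (p : Perm (Fin (2 * n)) × ℕ × ℕ) : Finset (Fin (2 * n) × Fin (2 * n)) :=
  innerEnds p.1 (block (2 * n) p.2.1 p.2.2) ×ˢ innerEnds p.1 (thickBlock (2 * n) p.2.1 p.2.2)ᶜ

/-- The pairs of bridges of the bubble of `p` whose ends in the bubble are distinct and not
adjacent. -/
def farBridgePairs (p : Perm (Fin (2 * n)) × ℕ × ℕ) : Finset (Fin (2 * n) × Fin (2 * n)) :=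
  {z ∈ bubbleBridges p ×ˢ bubbleBridges p | ¬ Near z.1 z.2}

lemma mem_splitChordPairs {p : Perm (Fin (2 * n)) × ℕ × ℕ} {z : Fin (2 * n) × Fin (2 * n)} :
    z ∈ splitChordPairs p ↔
      (z.1 ∈ block (2 * n) p.2.1 p.2.2 ∧ p.1 z.1 ∈ block (2 * n) p.2.1 p.2.2) ∧
      z.2 ∉ thickBlock (2 * n) p.2.1 p.2.2 ∧ p.1 z.2 ∉ thickBlock (2 * n) p.2.1 p.2.2 := by
  rw [splitChordPairs, mem_product, mem_innerEnds, mem_innerEnds, mem_compl, mem_compl]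

lemma mem_farBridgePairs {p : Perm (Fin (2 * n)) × ℕ × ℕ} {z : Fin (2 * n) × Fin (2 * n)} :
    z ∈ farBridgePairs p ↔
      ((z.1 ∈ block (2 * n) p.2.1 p.2.2 ∧ p.1 z.1 ∉ block (2 * n) p.2.1 p.2.2) ∧
      z.2 ∈ block (2 * n) p.2.1 p.2.2 ∧ p.1 z.2 ∉ block (2 * n) p.2.1 p.2.2) ∧ ¬ Near z.1 z.2 := by
  rw [farBridgePairs, mem_filter, mem_product, bubbleBridges, mem_bridgeEnds, mem_bridgeEnds]

/-- Reconnecting the two chords at the marked vertices `z.2 = (x, y)` of the diagram of `z.1`. The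
marks become `(x, f x)`, so that a second application restores the original. -/
def switch (z : (_ : Perm (Fin (2 * n)) × ℕ × ℕ) × Fin (2 * n) × Fin (2 * n)) :
    (_ : Perm (Fin (2 * n)) × ℕ × ℕ) × Fin (2 * n) × Fin (2 * n) :=
  ⟨(reconnect z.1.1 z.2.1 z.2.2, z.1.2), (z.2.1, z.1.1 z.2.1)⟩

lemma switch_switch {z : (_ : Perm (Fin (2 * n)) × ℕ × ℕ) × Fin (2 * n) × Fin (2 * n)}
    (hz : z.1.1 z.2.1 ≠ z.2.1) (hne : z.2.1 ≠ z.2.2) : switch (switch z) = z := by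
  simp only [switch, reconnect_apply_left hz hne, reconnect_reconnect hz hne]

lemma switch_mem_sigma_farBridgePairs
    {z : (_ : Perm (Fin (2 * n)) × ℕ × ℕ) × Fin (2 * n) × Fin (2 * n)}
    (hz : z ∈ (bubbles n q).sigma splitChordPairs) :
    z.2.1 ≠ z.2.2 ∧ switch z ∈ (bubbles n q).sigma farBridgePairs := by
  obtain ⟨⟨f, a, b⟩, x, y⟩ := z
  simp only [mem_sigma, mem_bubbles, mem_splitChordPairs] at hz
  obtain ⟨⟨hf, hb, hq⟩, ⟨hx, hfx⟩, hy, hfy⟩ := hz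
  have hsub := block_subset_thickBlock (2 * n) a b
  have hxy : x ≠ y := ne_of_mem_of_not_mem (hsub hx) hy
  have hbubble : IsBubble n (reconnect f x y) a b := by
    refine isBubble_reconnect hf hb hxy (fun z hz hz' => ⟨?_, ?_, ?_, ?_⟩)
      (fun _ h => hy (mem_thickBlock_of_near hx h)) (fun _ h => hfy (mem_thickBlock_of_near hfx h))
    · exact (ne_of_mem_of_not_mem hx hz').symm
    · exact ne_of_mem_of_not_mem hz hy
    · exact (ne_of_mem_of_not_mem hfx hz').symm
    · exact ne_of_mem_of_not_mem hz hfy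
  simp only [switch, mem_sigma, mem_bubbles, mem_farBridgePairs, reconnect_apply_left (hf.2 x) hxy,
    reconnect_apply_apply_left (hf.2 y) hxy]
  exact ⟨hxy, ⟨isDiagram_reconnect hf x y, hbubble, hq⟩, ⟨⟨hx, fun h => hy (hsub h)⟩, hfx,
    fun h => hfy (hsub h)⟩, hf.shortEnd_iff_near.not.mp (hb.not_shortEnd hx)⟩

lemma switch_mem_sigma_splitChordPairs
    {z : (_ : Perm (Fin (2 * n)) × ℕ × ℕ) × Fin (2 * n) × Fin (2 * n)}
    (hz : z ∈ (bubbles n q).sigma farBridgePairs) :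
    z.2.1 ≠ z.2.2 ∧ switch z ∈ (bubbles n q).sigma splitChordPairs := by
  obtain ⟨⟨f, a, b⟩, x, y⟩ := z
  simp only [mem_sigma, mem_bubbles, mem_farBridgePairs] at hz
  obtain ⟨⟨hf, hb, hq⟩, ⟨⟨hx, hfx⟩, hy, hfy⟩, hnear⟩ := hz
  have hxy : x ≠ y := by
    rintro rfl
    exact hnear ⟨Nat.le_succ _, Nat.le_succ _⟩
  have hfx' := hb.apply_notMem_thickBlock hf hx hfx
  have hfy' := hb.apply_notMem_thickBlock hf hy hfy
  have hbubble : IsBubble n (reconnect f x y) a b := by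
    refine isBubble_reconnect hf hb hxy (fun z hz hz' => ⟨?_, ?_, ?_, ?_⟩) (fun _ => hnear)
      (fun h => (h.elim hfx hfy).elim)
    · exact (ne_of_mem_of_not_mem hx hz').symm
    · exact (ne_of_mem_of_not_mem hy hz').symm
    · exact ne_of_mem_of_not_mem hz hfx'
    · exact ne_of_mem_of_not_mem hz hfy'
  simp only [switch, mem_sigma, mem_bubbles, mem_splitChordPairs,
    reconnect_apply_left (hf.2 x) hxy, reconnect_apply_apply_left (hf.2 y) hxy]
  exact ⟨hxy, ⟨isDiagram_reconnect hf x y, hbubble, hq⟩, ⟨hx, hy⟩, hfx', hfy'⟩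

lemma sum_card_splitChordPairs_eq (n q : ℕ) :
    ∑ p ∈ bubbles n q, #(splitChordPairs p) = ∑ p ∈ bubbles n q, #(farBridgePairs p) := by
  have hne {z : (_ : Perm (Fin (2 * n)) × ℕ × ℕ) × Fin (2 * n) × Fin (2 * n)}
      (hz : z.1 ∈ bubbles n q) : z.1.1 z.2.1 ≠ z.2.1 := (mem_bubbles.mp hz).1.2 _
  rw [← card_sigma, ← card_sigma]
  refine card_nbij' switch switch (fun z hz => (switch_mem_sigma_farBridgePairs hz).2)
    (fun z hz => (switch_mem_sigma_splitChordPairs hz).2) (fun z hz => ?_) (fun z hz => ?_)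
  · exact switch_switch (hne (mem_sigma.mp hz).1) (switch_mem_sigma_farBridgePairs hz).1
  · exact switch_switch (hne (mem_sigma.mp hz).1) (switch_mem_sigma_splitChordPairs hz).1

end Bubbles

section Counting

variable {n q : ℕ} {p : Perm (Fin (2 * n)) × ℕ × ℕ}

lemma card_block_of_mem_bubbles (hp : p ∈ bubbles n q) : #(block (2 * n) p.2.1 p.2.2) = q := by
  obtain ⟨-, hb, hq⟩ := mem_bubbles.mp hp
  rw [card_block _ hb.2.1, ← hq, bubbleSize]

lemma card_bubbleBridges_le (hp : p ∈ bubbles n q) : #(bubbleBridges p) ≤ q :=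
  (card_filter_le _ _).trans_eq (card_block_of_mem_bubbles hp)

lemma cast_card_innerEnds_block (hp : p ∈ bubbles n q) :
    (#(innerEnds p.1 (block (2 * n) p.2.1 p.2.2)) : ℝ) = q - #(bubbleBridges p) := by
  rw [eq_sub_iff_add_eq, ← card_block_of_mem_bubbles hp]
  exact_mod_cast card_innerEnds_add_card_bridgeEnds _ _

lemma cast_card_innerEnds_compl_block (hp : p ∈ bubbles n q) :
    (#(innerEnds p.1 (block (2 * n) p.2.1 p.2.2)ᶜ) : ℝ) = 2 * n - q - #(bubbleBridges p) := by
  have hsplit := card_innerEnds_add_card_bridgeEnds p.1 (block (2 * n) p.2.1 p.2.2)ᶜ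
  rw [card_bridgeEnds_compl (mem_bubbles.mp hp).1.1] at hsplit
  have htotal := card_add_card_compl (block (2 * n) p.2.1 p.2.2)
  rw [card_block_of_mem_bubbles hp, Fintype.card_fin, ← hsplit] at htotal
  rw [bubbleBridges, eq_sub_iff_add_eq, eq_sub_iff_add_eq, add_comm]
  exact_mod_cast htotal

lemma card_splitChordPairs_le (hp : p ∈ bubbles n q) :
    (#(splitChordPairs p) : ℝ) ≤ (q - #(bubbleBridges p)) * (2 * n - q - #(bubbleBridges p)) := by
  rw [splitChordPairs, card_product, Nat.cast_mul, ← cast_card_innerEnds_block hp,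
    ← cast_card_innerEnds_compl_block hp]
  gcongr
  exact innerEnds_mono _ (compl_subset_compl.mpr (block_subset_thickBlock _ _ _))

lemma le_card_splitChordPairs (hp : p ∈ bubbles n q) :
    (q - #(bubbleBridges p)) * (2 * n - q - #(bubbleBridges p) - 4 : ℝ) ≤
      #(splitChordPairs p) := by
  have hcard : #(innerEnds p.1 (block (2 * n) p.2.1 p.2.2)ᶜ) ≤
      #(innerEnds p.1 (thickBlock (2 * n) p.2.1 p.2.2)ᶜ) + 4 := by
    refine (card_innerEnds_le p.1 _ (thickBlock (2 * n) p.2.1 p.2.2)ᶜ).trans ?_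
    rw [compl_sdiff_compl]
    have hborder := card_thickBlock_sdiff_block_le (2 * n) p.2.1 p.2.2
    omega
  rw [splitChordPairs, card_product, Nat.cast_mul, ← cast_card_innerEnds_block hp,
    ← cast_card_innerEnds_compl_block hp]
  gcongr
  rw [sub_le_iff_le_add]
  exact_mod_cast hcard

lemma card_farBridgePairs_le (p : Perm (Fin (2 * n)) × ℕ × ℕ) :
    #(farBridgePairs p) ≤ #(bubbleBridges p) * #(bubbleBridges p) :=
  (card_filter_le _ _).trans_eq (card_product _ _)

lemma le_card_farBridgePairs (p : Perm (Fin (2 * n)) × ℕ × ℕ) :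
    #(bubbleBridges p) * #(bubbleBridges p) ≤ #(farBridgePairs p) + 3 * #(bubbleBridges p) := by
  have hnear : #{z ∈ bubbleBridges p ×ˢ bubbleBridges p | Near z.1 z.2} ≤
      3 * #(bubbleBridges p) := by
    rw [card_filter, sum_product, mul_comm 3]
    refine sum_le_card_nsmul _ _ _ fun i _ => ?_
    rw [← card_filter]
    exact card_filter_near_le _ i
  have hsplit := card_filter_add_card_filter_not (s := bubbleBridges p ×ˢ bubbleBridges p)
    (fun z => Near z.1 z.2)
  rw [card_product] at hsplit
  rw [farBridgePairs]
  omega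

lemma abs_card_bubbleBridges_sub_le (hp : p ∈ bubbles n q) :
    |2 * n * (#(bubbleBridges p) : ℝ) - q * (2 * n - q)
      - ((#(farBridgePairs p) : ℝ) - #(splitChordPairs p))| ≤ 4 * q := by
  have hle : (#(bubbleBridges p) : ℝ) ≤ q := mod_cast card_bubbleBridges_le hp
  have hsplit := card_splitChordPairs_le hp
  have hsplit' := le_card_splitChordPairs hp
  have hfar : (#(farBridgePairs p) : ℝ) ≤ #(bubbleBridges p) * #(bubbleBridges p) :=
    mod_cast card_farBridgePairs_le p
  have hfar' : (#(bubbleBridges p) * #(bubbleBridges p) : ℝ) ≤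
      #(farBridgePairs p) + 3 * #(bubbleBridges p) := mod_cast le_card_farBridgePairs p
  rw [abs_le]
  constructor <;> linarith

lemma abs_sum_card_bubbleBridges_sub_le (n q : ℕ) :
    |2 * n * (∑ p ∈ bubbles n q, (#(bubbleBridges p) : ℝ)) - q * (2 * n - q) * #(bubbles n q)|
      ≤ 4 * q * #(bubbles n q) := by
  have hswitch : (∑ p ∈ bubbles n q, (#(splitChordPairs p) : ℝ)) =
      ∑ p ∈ bubbles n q, (#(farBridgePairs p) : ℝ) := mod_cast sum_card_splitChordPairs_eq n q
  calc |2 * n * (∑ p ∈ bubbles n q, (#(bubbleBridges p) : ℝ)) - q * (2 * n - q) * #(bubbles n q)|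
      = |∑ p ∈ bubbles n q, (2 * n * (#(bubbleBridges p) : ℝ) - q * (2 * n - q)
          - ((#(farBridgePairs p) : ℝ) - #(splitChordPairs p)))| := by
        simp only [sum_sub_distrib, hswitch, ← mul_sum, sum_const, nsmul_eq_mul]
        ring_nf
    _ ≤ ∑ p ∈ bubbles n q, |2 * n * (#(bubbleBridges p) : ℝ) - q * (2 * n - q)
          - ((#(farBridgePairs p) : ℝ) - #(splitChordPairs p))| := abs_sum_le_sum_abs _ _
    _ ≤ #(bubbles n q) • (4 * q : ℝ) :=
        sum_le_card_nsmul _ _ _ fun _ hp => abs_card_bubbleBridges_sub_le hp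
    _ = 4 * q * #(bubbles n q) := by rw [nsmul_eq_mul, mul_comm]

lemma N_eq_card_filter (n q b : ℕ) : N n q b = #{p ∈ bubbles n q | #(bubbleBridges p) = b} := by
  rw [N, ← Nat.card_eq_finsetCard]
  refine Nat.card_congr (Equiv.subtypeEquivRight fun p => ?_)
  rw [mem_filter, mem_bubbles, bridges_eq_card_bridgeEnds, bubbleBridges, and_assoc, and_assoc]

lemma meanBridges_eq_sum_div_card (n q : ℕ) :
    meanBridges n q = (∑ p ∈ bubbles n q, (#(bubbleBridges p) : ℝ)) / #(bubbles n q) := by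
  have hmaps : ∀ p ∈ bubbles n q, #(bubbleBridges p) ∈ range (2 * n + 1) := fun p _ =>
    mem_range_succ_iff.mpr (card_finset_fin_le _)
  rw [meanBridges, ← sum_fiberwise_of_maps_to hmaps, card_eq_sum_card_fiberwise hmaps,
    Nat.cast_sum]
  congr 1
  · refine sum_congr rfl fun b _ => ?_
    rw [N_eq_card_filter, mul_comm, ← nsmul_eq_mul, ← sum_const]
    exact sum_congr rfl fun p hp => by rw [(mem_filter.mp hp).2]
  · exact sum_congr rfl fun b _ => by rw [N_eq_card_filter]

lemma abs_meanBridges_mul_sub_le (h : (bubbles n q).Nonempty) :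
    |meanBridges n q * (2 * n) - q * (2 * n - q)| ≤ 4 * q := by
  have hcard : (0 : ℝ) < #(bubbles n q) := mod_cast h.card_pos
  rw [← mul_le_mul_iff_left₀ hcard]
  refine (abs_sum_card_bubbleBridges_sub_le n q).trans' (le_of_eq ?_)
  rw [meanBridges_eq_sum_div_card, ← abs_of_pos hcard, ← abs_mul, abs_of_pos hcard, sub_mul]
  congr 2
  field_simp

end Counting

section Existence

/-- The increasing enumeration of the natural numbers other than `q` and `q + 1`. -/
def skipPair (q i : ℕ) : ℕ := if i < q then i else i + 2

/-- The left inverse of `skipPair q`. -/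
def unskipPair (q i : ℕ) : ℕ := if i < q then i else i - 2

/-- The involution of `{0, …, 2m - 1}` that matches `i` with `i + m` for `i < m`. -/
def halfTurn (m i : ℕ) : ℕ := if i < m then i + m else i - m

/-- The partner of `i` in a diagram on `2m + 2` vertices whose only short chord, if `m ≥ 2`, is
`{q, q + 1}`, so that its first `q` vertices form a bubble. -/
def oneShortPartner (m q i : ℕ) : ℕ :=
  if i = q then q + 1 else if i = q + 1 then q else skipPair q (halfTurn m (unskipPair q i))

variable {m n q i : ℕ}

lemma oneShortPartner_lt (hq : q ≤ 2 * m) (hi : i < 2 * (m + 1)) :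
    oneShortPartner m q i < 2 * (m + 1) := by
  grind [oneShortPartner, skipPair, halfTurn, unskipPair]

lemma oneShortPartner_oneShortPartner (hq : q ≤ 2 * m) (hi : i < 2 * (m + 1)) :
    oneShortPartner m q (oneShortPartner m q i) = i := by
  grind [oneShortPartner, skipPair, halfTurn, unskipPair]

lemma oneShortPartner_not_adjacent (hm : 2 ≤ m) (hi : i < q) :
    oneShortPartner m q i ≠ i + 1 ∧ oneShortPartner m q i + 1 ≠ i := by
  grind [oneShortPartner, skipPair, halfTurn, unskipPair]

lemma oneShortPartner_ne (hm : 0 < m) : oneShortPartner m q i ≠ i := by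
  grind [oneShortPartner, skipPair, halfTurn, unskipPair]

lemma bubbles_nonempty (hn : 3 ≤ n) (hq : 0 < q) (hqn : q + 2 ≤ 2 * n) :
    (bubbles n q).Nonempty := by
  obtain ⟨m, rfl⟩ : ∃ m, n = m + 1 := ⟨n - 1, by omega⟩
  let f (i : Fin (2 * (m + 1))) : Fin (2 * (m + 1)) :=
    ⟨oneShortPartner m q i, oneShortPartner_lt (by omega) i.2⟩
  have hf : Function.Involutive f := fun i =>
    Fin.ext (oneShortPartner_oneShortPartner (by omega) i.2)
  refine ⟨(hf.toPerm f, 0, q - 1), mem_bubbles.mpr ⟨⟨hf, fun i h => ?_⟩,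
    ⟨Nat.zero_le _, by simp only; omega, fun i _ hi h => ?_, .inl rfl,
      .inr ⟨⟨q, by omega⟩, by simp only; omega, .inl ?_⟩⟩, by simp only [bubbleSize]; omega⟩⟩
  · exact oneShortPartner_ne (by omega) (congrArg Fin.val h)
  · have hadj := oneShortPartner_not_adjacent (m := m) (by omega)
      (show i.val < q by simp only at hi; omega)
    exact h.elim hadj.1 hadj.2
  · exact if_pos rfl

end Existence

section Limit

lemma abs_meanBridges_ratio_sub_one_le {n q : ℕ} (hn : 3 ≤ n) (hq : 0 < q) (hqn : q + 2 ≤ 2 * n) :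
    |meanBridges n q * (2 * n) / (q * (2 * n - q)) - 1| ≤ 4 / (2 * n - q : ℝ) := by
  have hq0 : (0 : ℝ) < q := mod_cast hq
  have hqn' : (q : ℝ) + 2 ≤ 2 * n := mod_cast hqn
  have hd : (0 : ℝ) < 2 * n - q := by linarith
  have hpos : (0 : ℝ) < q * (2 * n - q) := mul_pos hq0 hd
  calc |meanBridges n q * (2 * n) / (q * (2 * n - q)) - 1|
      = |meanBridges n q * (2 * n) - q * (2 * n - q)| / (q * (2 * n - q)) := by
        rw [div_sub_one hpos.ne', abs_div, abs_of_pos hpos]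
    _ ≤ 4 * q / (q * (2 * n - q)) := by
        gcongr
        exact abs_meanBridges_mul_sub_le (bubbles_nonempty hn hq hqn)
    _ = 4 / (2 * n - q) := by rw [mul_comm 4, mul_div_mul_left _ _ hq0.ne']

lemma tendsto_mul_sub_atTop_of_tendsto_div {c d : ℝ} {r : ℕ → ℝ} (hcd : c < d)
    (hr : Filter.Tendsto (fun n => r n / n) Filter.atTop (nhds c)) :
    Filter.Tendsto (fun n : ℕ => d * n - r n) Filter.atTop Filter.atTop := by
  have hmul : Filter.Tendsto (fun n : ℕ => (n : ℝ) * (d - r n / n)) Filter.atTop Filter.atTop :=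
    tendsto_natCast_atTop_atTop.atTop_mul_pos (sub_pos.mpr hcd) (hr.const_sub d)
  refine hmul.congr' ((Filter.eventually_ne_atTop 0).mono fun n hn => ?_)
  field_simp

lemma eventually_pos_of_tendsto_div {c : ℝ} {q : ℕ → ℕ} (hc : 0 < c)
    (hq : Filter.Tendsto (fun n => (q n : ℝ) / n) Filter.atTop (nhds c)) :
    ∀ᶠ n in Filter.atTop, 0 < q n := by
  refine (hq.eventually_const_lt hc).mono fun n hn => Nat.pos_of_ne_zero fun h => ?_
  rw [h, Nat.cast_zero, zero_div] at hn
  exact hn.false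

theorem mean_bridges_asymptotic_general (q : ℕ → ℕ) (hq0 : ∀ᶠ n in Filter.atTop, 0 < q n)
    (hq : Filter.Tendsto (fun n : ℕ => 2 * (n : ℝ) - q n) Filter.atTop Filter.atTop) :
    Filter.Tendsto
      (fun n => meanBridges n (q n) * (2 * (n : ℝ)) / ((q n : ℝ) * (2 * (n : ℝ) - (q n : ℝ))))
      Filter.atTop (nhds 1) := by
  rw [tendsto_iff_dist_tendsto_zero]
  refine squeeze_zero' (.of_forall fun _ => dist_nonneg) ?_ (hq.const_div_atTop 4)
  filter_upwards [Filter.eventually_ge_atTop 3, hq0, hq.eventually_ge_atTop 2] with n hn hqn hgap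
  exact abs_meanBridges_ratio_sub_one_le hn hqn (mod_cast (by linarith : (q n : ℝ) + 2 ≤ 2 * n))

end Limit

/-- The mean number of bridges of bubbles of size `q n` in diagrams with `n` chords is
asymptotic to `q(2n-q)/(2n)` whenever `q n / n → c` with `0 < c < 2`. -/
theorem mean_bridges_asymptotic (c : ℝ) (hc0 : 0 < c) (hc2 : c < 2) (q : ℕ → ℕ)
    (hq : Filter.Tendsto (fun n => (q n : ℝ) / n) Filter.atTop (nhds c)) :
    Filter.Tendsto
      (fun n => meanBridges n (q n) * (2 * (n : ℝ)) / ((q n : ℝ) * (2 * (n : ℝ) - (q n : ℝ))))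
      Filter.atTop (nhds 1) :=
  mean_bridges_asymptotic_general q (eventually_pos_of_tendsto_div hc0 hq)
    (tendsto_mul_sub_atTop_of_tendsto_div hc2 hq)

end ChordBubbles
end

section
/- For every n ≥ 1, the number of crystallized linear chord diagrams with n chords having exactly one short chord is R_{n,1} = (n − 1)!. -/
namespace ChordBubbles

/-- A diagram is crystallized when all its bubbles are empty, i.e., no chord joins two vertices
lying in the same bubble. -/
def Crystallized (n : ℕ) (f : Equiv.Perm (Fin (2 * n))) : Prop :=
  ∀ a b, IsBubble n f a b → ∀ i : Fin (2 * n),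
    a ≤ i.val → i.val ≤ b → ¬ (a ≤ (f i).val ∧ (f i).val ≤ b)

/-- The number of short chords of a diagram. -/
noncomputable def shortChords (n : ℕ) (f : Equiv.Perm (Fin (2 * n))) : ℕ :=
  Nat.card {i : Fin (2 * n) // (f i).val = i.val + 1}

/-- `R n k` : the number of crystallized diagrams with `n` chords, exactly `k` of them short. -/
noncomputable def R (n k : ℕ) : ℕ :=
  Nat.card {f : Equiv.Perm (Fin (2 * n)) //
    IsDiagram n f ∧ Crystallized n f ∧ shortChords n f = k}

/-!
Let a crystallized diagram have a single short chord, joining `s` and `s + 1`. The vertices before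
`s` form a bubble, and so do the vertices after `s + 1`, hence every chord crosses the cut between
`s` and `s + 1`. Its two sides are therefore equinumerous, so the cut is the midpoint, and the
diagram amounts to a permutation `σ` of `{0, …, n - 1}` matching the vertex `i` of the left half
with the vertex `n + σ i` of the right half. Conversely, in such a diagram only the chord joining
`n - 1` and `n` can be short, and it is present exactly when `σ (n - 1) = 0`. There are `(n - 1)!`
permutations with this property.
-/

open Function

section Permutations

variable {α : Type*}

theorem card_perm_apply_eq [Finite α] (a b : α) :
    Nat.card {σ : Equiv.Perm α // σ a = b} = (Nat.card α - 1).factorial := by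
  classical
  have := Fintype.ofFinite α
  have card_ne (c : α) : Fintype.card {x // x ≠ c} = Fintype.card α - 1 := by
    rw [Fintype.card_subtype_compl, Fintype.card_subtype_eq]
  have e : {σ : Equiv.Perm α // σ a = b} ≃ ({x // x ≠ a} ≃ {y // y ≠ b}) :=
    (((Equiv.optionSubtypeNe a).symm.equivCongr (Equiv.refl α)).subtypeEquiv
      fun σ ↦ by simp [Equiv.equivCongr]).trans (Equiv.optionSubtype b)
  have e' : {x // x ≠ a} ≃ {y // y ≠ b} :=
    Fintype.equivOfCardEq ((card_ne a).trans (card_ne b).symm)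
  rw [Nat.card_congr e, Nat.card_eq_fintype_card, Fintype.card_equiv e', card_ne,
    Nat.card_eq_fintype_card]

/-- The involution of two copies of `α` that matches `a` in the first copy with `σ a` in the
second. -/
def sumMatching (σ : Equiv.Perm α) : Equiv.Perm (α ⊕ α) :=
  (Equiv.sumComm α α).trans (σ.symm.sumCongr σ)

@[simp]
theorem sumMatching_inl (σ : Equiv.Perm α) (a : α) : sumMatching σ (.inl a) = .inr (σ a) := rfl

@[simp]
theorem sumMatching_inr (σ : Equiv.Perm α) (a : α) :
    sumMatching σ (.inr a) = .inl (σ.symm a) := rfl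

theorem sumMatching_involutive (σ : Equiv.Perm α) : Involutive (sumMatching σ) := by
  rintro (a | a) <;> simp

theorem sumMatching_injective : Injective (sumMatching (α := α)) := fun _ _ h ↦
  Equiv.ext fun a ↦ Sum.inr_injective (DFunLike.congr_fun h (.inl a))

theorem exists_sumMatching_eq {g : Equiv.Perm (α ⊕ α)} (hg : Involutive g)
    (hl : ∀ a, ∃ b, g (.inl a) = .inr b) (hr : ∀ b, ∃ a, g (.inr b) = .inl a) :
    ∃ σ, sumMatching σ = g := by
  choose s hs using hl
  choose t ht using hr
  have hts (a) : t (s a) = a := Sum.inl_injective (by rw [← ht, ← hs, hg])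
  have hst (b) : s (t b) = b := Sum.inr_injective (by rw [← hs, ← ht, hg])
  refine ⟨⟨s, t, hts, hst⟩, Equiv.ext ?_⟩
  rintro (a | b)
  exacts [(hs a).symm, (ht b).symm]

end Permutations

section Cuts

variable {N k : ℕ} {f : Equiv.Perm (Fin N)}

/-- `f` moves every vertex to the other side of the cut between `k - 1` and `k`; when `f` is a chord
diagram, this says that every chord crosses the cut. -/
def CrossesCut (f : Equiv.Perm (Fin N)) (k : ℕ) : Prop :=
  ∀ i, i.val < k ↔ k ≤ (f i).val

theorem CrossesCut.two_mul_eq (h : CrossesCut f k) (hk : k ≤ N) : 2 * k = N := by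
  have e : {i : Fin N // i.val < k} ≃ {j : Fin N // ¬ j.val < k} :=
    f.subtypeEquiv fun i ↦ by rw [not_lt]; exact h i
  have hcard := Fintype.card_congr e
  rw [Fintype.card_subtype_compl, Fintype.card_fin_lt_of_le hk, Fintype.card_fin] at hcard
  omega

theorem CrossesCut.eq_of_apply_eq_succ (h : CrossesCut f k) {s : Fin N}
    (hs : (f s).val = s.val + 1) : k = s + 1 := by
  have := h s
  omega

end Cuts

section Diagrams

variable {n : ℕ} {f : Equiv.Perm (Fin (2 * n))}

theorem shortChords_eq_one_iff :
    shortChords n f = 1 ↔ ∃! i : Fin (2 * n), (f i).val = i.val + 1 := by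
  rw [shortChords, Nat.card_eq_one_iff_unique, ← unique_subtype_iff_existsUnique,
    unique_iff_subsingleton_and_nonempty]

theorem Crystallized.le_apply_of_lt (hc : Crystallized n f) {t i : Fin (2 * n)}
    (ht : IsLeast {j | ShortEnd n f j} t) (hi : i < t) : t ≤ f i := by
  have hbubble : IsBubble n f 0 (t - 1) :=
    ⟨by omega, by omega, fun j _ hj hshort ↦ by have := ht.2 hshort; omega, .inl rfl,
      .inr ⟨t, by omega, ht.1⟩⟩
  have := hc _ _ hbubble i (by omega) (by omega)
  omega

theorem Crystallized.apply_le_of_gt (hc : Crystallized n f) {t i : Fin (2 * n)}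
    (ht : IsGreatest {j | ShortEnd n f j} t) (hi : t < i) : f i ≤ t := by
  have hbubble : IsBubble n f (t + 1) (2 * n - 1) :=
    ⟨by omega, by omega, fun j hj _ hshort ↦ by have := ht.2 hshort; omega,
      .inr ⟨t, rfl, ht.1⟩, .inl (by omega)⟩
  have := hc _ _ hbubble i (by omega) (by omega)
  omega

theorem IsDiagram.shortEnd_iff (hf : IsDiagram n f) {i : Fin (2 * n)} :
    ShortEnd n f i ↔ (f i).val = i.val + 1 ∨ (f (f i)).val = (f i).val + 1 := by
  rw [ShortEnd, hf.1 i, eq_comm (a := i.val)]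

theorem IsDiagram.setOf_shortEnd_eq_pair (hf : IsDiagram n f) {s : Fin (2 * n)}
    (hs : (f s).val = s.val + 1) (huniq : ∀ i, (f i).val = i.val + 1 → i = s) :
    {i | ShortEnd n f i} = {s, f s} := by
  ext i
  have hiff (j) : (f j).val = j.val + 1 ↔ j = s := ⟨huniq j, by rintro rfl; exact hs⟩
  have hswap : f i = s ↔ i = f s := ⟨fun h ↦ by rw [← h, hf.1], fun h ↦ by rw [h, hf.1]⟩
  simp only [Set.mem_ofPred_eq, Set.mem_insert_iff, Set.mem_singleton_iff, hf.shortEnd_iff, hiff,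
    hswap]

theorem Crystallized.crossesCut (hc : Crystallized n f) (hf : IsDiagram n f) {s : Fin (2 * n)}
    (hs : (f s).val = s.val + 1) (huniq : ∀ i, (f i).val = i.val + 1 → i = s) :
    CrossesCut f (s + 1) := by
  have hlt : s < f s := by omega
  have hends := hf.setOf_shortEnd_eq_pair hs huniq
  have hleast : IsLeast {i | ShortEnd n f i} s := by
    simpa only [hends, min_eq_left hlt.le] using isLeast_pair (a := s) (b := f s)
  have hgreatest : IsGreatest {i | ShortEnd n f i} (f s) := by
    simpa only [hends, max_eq_right hlt.le] using isGreatest_pair (a := s) (b := f s)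
  have hleft {i} (hi : i < s) : s < f i :=
    (hc.le_apply_of_lt hleast hi).lt_of_ne fun h ↦ by
      have hi' : i = f s := by rw [h, hf.1]
      exact lt_asymm hlt (hi' ▸ hi)
  have hright {i} (hi : f s < i) : f i < f s :=
    (hc.apply_le_of_gt hgreatest hi).lt_of_ne fun h ↦
      lt_asymm hlt (f.injective h ▸ hi)
  intro i
  obtain hi | rfl | hi := lt_trichotomy i s
  · have := hleft hi; omega
  · omega
  · obtain rfl | hi' : i = f s ∨ f s < i := by omega
    · rw [hf.1]; omega
    · have := hright hi'; omega

theorem CrossesCut.crystallized {k : ℕ} (h : CrossesCut f k) {s : Fin (2 * n)}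
    (hs : (f s).val = s.val + 1) : Crystallized n f := by
  rintro a b ⟨-, -, hshort, -, -⟩ i hai hib hfi
  -- A chord inside `[a, b]` crosses the cut, so `[a, b]` contains the end `s` of a short chord.
  have hk := h.eq_of_apply_eq_succ hs
  have := h i
  exact hshort s (by omega) (by omega) (.inl hs)

theorem IsDiagram.crystallized_and_shortChords_eq_one_iff (hf : IsDiagram n f) :
    Crystallized n f ∧ shortChords n f = 1 ↔
      CrossesCut f n ∧ ∃ s : Fin (2 * n), (f s).val = s.val + 1 := by
  rw [shortChords_eq_one_iff]
  constructor
  · rintro ⟨hc, s, hs, huniq⟩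
    have hcut := hc.crossesCut hf hs huniq
    have hmid : s.val + 1 = n := Nat.mul_left_cancel two_pos (hcut.two_mul_eq s.isLt)
    rw [hmid] at hcut
    exact ⟨hcut, s, hs⟩
  · rintro ⟨hcut, s, hs⟩
    refine ⟨hcut.crystallized hs, s, hs, fun i hi ↦ ?_⟩
    have := hcut.eq_of_apply_eq_succ hs
    have := hcut.eq_of_apply_eq_succ hi
    omega

end Diagrams

section Halves

variable {n : ℕ}

/-- The vertices `0, …, 2 * n - 1` cut at the midpoint into two halves of `n` vertices each. -/
def halves (n : ℕ) : Fin n ⊕ Fin n ≃ Fin (2 * n) :=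
  finSumFinEquiv.trans (finCongr (two_mul n).symm)

@[simp]
theorem val_halves_inl (a : Fin n) : (halves n (.inl a)).val = a := by simp [halves]

@[simp]
theorem val_halves_inr (a : Fin n) : (halves n (.inr a)).val = n + a := by
  simp [halves, add_comm]

/-- The linear chord diagram that matches vertex `i` of the left half with vertex `n + σ i` of the
right half. -/
def permDiagram (σ : Equiv.Perm (Fin n)) : Equiv.Perm (Fin (2 * n)) :=
  (halves n).permCongr (sumMatching σ)

@[simp]
theorem permDiagram_halves (σ : Equiv.Perm (Fin n)) (x : Fin n ⊕ Fin n) :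
    permDiagram σ (halves n x) = halves n (sumMatching σ x) := by
  simp [permDiagram]

theorem permDiagram_injective : Injective (permDiagram (n := n)) :=
  (halves n).permCongr.injective.comp sumMatching_injective

theorem permDiagram_isDiagram (σ : Equiv.Perm (Fin n)) : IsDiagram n (permDiagram σ) := by
  constructor <;> refine (halves n).forall_congr_right.mp fun x ↦ ?_
  · rw [permDiagram_halves, permDiagram_halves, sumMatching_involutive]
  · rcases x with a | a <;> simp

theorem permDiagram_crossesCut (σ : Equiv.Perm (Fin n)) : CrossesCut (permDiagram σ) n := by
  refine (halves n).forall_congr_right.mp ?_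
  rintro (a | a) <;> simp

theorem exists_permDiagram_eq {f : Equiv.Perm (Fin (2 * n))} (hf : IsDiagram n f)
    (hcut : CrossesCut f n) : ∃ σ, permDiagram σ = f := by
  let g := (halves n).symm.permCongr f
  have hfg (x) : f (halves n x) = halves n (g x) := by simp [g]
  have hg : Involutive g := fun x ↦ (halves n).injective (by rw [← hfg, ← hfg, hf.1])
  have hl (a) : ∃ b, g (.inl a) = .inr b := by
    have hside := hcut (halves n (.inl a))
    rw [hfg] at hside
    rcases hga : g (.inl a) with b | b
    · simp [hga, b.isLt.not_ge] at hside
    · exact ⟨b, rfl⟩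
  have hr (a) : ∃ b, g (.inr a) = .inl b := by
    have hside := hcut (halves n (.inr a))
    rw [hfg] at hside
    rcases hga : g (.inr a) with b | b
    · exact ⟨b, rfl⟩
    · simp [hga] at hside
  obtain ⟨σ, hσ⟩ := exists_sumMatching_eq hg hl hr
  exact ⟨σ, by rw [permDiagram, hσ]; exact (halves n).permCongr.apply_symm_apply f⟩

theorem exists_permDiagram_apply_eq_succ_iff {m : ℕ} (σ : Equiv.Perm (Fin (m + 1))) :
    (∃ s, (permDiagram σ s).val = s.val + 1) ↔ σ (Fin.last m) = 0 := by
  constructor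
  · rintro ⟨s, hs⟩
    have hmid := (permDiagram_crossesCut σ).eq_of_apply_eq_succ hs
    obtain rfl : s = halves (m + 1) (.inl (Fin.last m)) := Fin.ext (by simp; omega)
    simpa using hs
  · exact fun h ↦ ⟨halves (m + 1) (.inl (Fin.last m)), by simp [h]⟩

theorem setOf_crystallized_shortChords_eq_one (m : ℕ) :
    {f | IsDiagram (m + 1) f ∧ Crystallized (m + 1) f ∧ shortChords (m + 1) f = 1} =
      permDiagram '' {σ | σ (Fin.last m) = 0} := by
  ext f
  constructor
  · rintro ⟨hf, hcs⟩
    obtain ⟨hcut, hshort⟩ := hf.crystallized_and_shortChords_eq_one_iff.mp hcs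
    obtain ⟨σ, rfl⟩ := exists_permDiagram_eq hf hcut
    exact ⟨σ, (exists_permDiagram_apply_eq_succ_iff σ).mp hshort, rfl⟩
  · rintro ⟨σ, hσ, rfl⟩
    have hf := permDiagram_isDiagram σ
    exact ⟨hf, hf.crystallized_and_shortChords_eq_one_iff.mpr
      ⟨permDiagram_crossesCut σ, (exists_permDiagram_apply_eq_succ_iff σ).mpr hσ⟩⟩

end Halves

/-- The number of crystallized diagrams with `n` chords and exactly one short chord is
`(n-1)!`. -/
theorem R_n_one (n : ℕ) (hn : 1 ≤ n) : R n 1 = Nat.factorial (n - 1) := by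
  obtain ⟨m, rfl⟩ := Nat.exists_eq_add_of_le' hn
  calc
    R (m + 1) 1 = Nat.card (permDiagram '' {σ | σ (Fin.last m) = 0}) := by
      rw [← setOf_crystallized_shortChords_eq_one]; rfl
    _ = Nat.card {σ : Equiv.Perm (Fin (m + 1)) // σ (Fin.last m) = 0} :=
      Nat.card_image_of_injective permDiagram_injective _
    _ = (m + 1 - 1).factorial := by rw [card_perm_apply_eq, Nat.card_fin]

end ChordBubbles
end

section
/- For all integers n ≥ k ≥ 1, the number of crystallized linear chord diagrams with n chords, exactly k of which are short, is R_{n,k} = Σ (w_1! · w_2! ⋯ w_{k+1}!) / (p_1! · p_2! ⋯ p_E!), where E = k(k+1)/2, the sum ranges over all tuples (p_1,…,p_E) of nonnegative integers with p_1 + ⋯ + p_E = n − k, and w = B·p, i.e., w_j = Σ_{i : edge i of K_{k+1} is incident to vertex j} p_i for each vertex j of K_{k+1}. -/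
namespace ChordBubbles

/-- The edge set of the complete graph on `m` vertices. -/
def Edge (m : ℕ) := {e : Sym2 (Fin m) // ¬ e.IsDiag}

instance (m : ℕ) : Fintype (Edge m) := Subtype.fintype _
instance (m : ℕ) : DecidableEq (Edge m) := Subtype.instDecidableEq

/-- `wvec p j` : the entry of `w = B p` at the vertex `j`, where `B` is the incidence matrix of
the complete graph; i.e., the sum of `p` over the edges incident to `j`. -/
def wvec {m : ℕ} (p : Edge m → ℕ) (j : Fin m) : ℕ :=
  ∑ e : Edge m, if j ∈ e.val then p e else 0

/-!
The `k` short chords of a diagram cut the line into `k + 1` gaps, and the bubbles are the nonempty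
gaps. A crystallized diagram is therefore a choice of the short chords together with a perfect
matching of the remaining vertices that never joins two vertices of the same gap. If `p e` chords of
this matching join the two gaps forming the edge `e` of `K_{k+1}`, then the gap `j` has `wvec p j`
vertices, so that `p` determines the positions of the short chords.

To count the matchings with given multiplicities `p`, number the chords over each edge `e` from `1`
to `p e`. A numbered matching is the same as a bijection from the `2 * (n - k)` numbered ends of
chords onto the vertices that respects gaps. There are `∏ j, (wvec p j)!` such bijections, and each
matching is numbered in `∏ e, (p e)!` ways.
-/

section Sums

theorem eq_of_sum_Iic_eq {ι M : Type*} [LinearOrder ι] [LocallyFiniteOrderBot ι]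
    [WellFoundedLT ι] [AddCancelCommMonoid M] {u v : ι → M}
    (h : ∀ i, ∑ j ∈ Finset.Iic i, u j = ∑ j ∈ Finset.Iic i, v j) : u = v := by
  funext i
  induction i using WellFoundedLT.induction with
  | _ i ih =>
    have hIio : ∑ j ∈ Finset.Iio i, u j = ∑ j ∈ Finset.Iio i, v j :=
      Finset.sum_congr rfl fun j hj => ih j (Finset.mem_Iio.1 hj)
    have hi := h i
    simpa [← Finset.Iio_insert, hIio] using hi

theorem filter_piFinset_range_sum_eq {ι : Type*} [Fintype ι] [DecidableEq ι] (N : ℕ) :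
    (Fintype.piFinset fun _ : ι => Finset.range (N + 1)).filter (fun p => ∑ i, p i = N) =
      Finset.univ.piAntidiag N := by
  ext p
  simp only [Finset.mem_filter, Fintype.mem_piFinset, Finset.mem_range, Finset.mem_piAntidiag,
    Finset.mem_univ, implies_true, and_true, and_iff_right_iff_imp]
  rintro rfl i
  exact Nat.lt_succ_of_le (Finset.single_le_sum (fun _ _ => Nat.zero_le _) (Finset.mem_univ i))

end Sums

section ColoredEquivs

variable {α β ι : Type*} [Finite α] [Finite β] {a : α → ι} {b : β → ι}

theorem exists_equiv_comp_eq (h : ∀ i, Nat.card {x // a x = i} = Nat.card {y // b y = i}) :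
    ∃ φ : α ≃ β, b ∘ φ = a :=
  ⟨Equiv.ofFiberEquiv fun i => (Finite.card_eq.1 (h i)).some,
    funext <| Equiv.ofFiberEquiv_map _⟩

theorem card_equiv_comp_eq [Fintype ι]
    (h : ∀ i, Nat.card {x // a x = i} = Nat.card {y // b y = i}) :
    Nat.card {φ : α ≃ β // b ∘ φ = a} = ∏ i, (Nat.card {x // a x = i}).factorial := by
  classical
  have := Fintype.ofFinite α
  obtain ⟨φ, hφ⟩ := exists_equiv_comp_eq h
  have hφ' (σ : α ≃ α) : a ∘ σ = a ↔ b ∘ σ.trans φ = a := by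
    nth_rw 1 [← hφ]
    rfl
  rw [← Nat.card_congr ((Equiv.equivCongr (Equiv.refl α) φ).subtypeEquiv hφ'),
    Nat.card_eq_fintype_card, DomMulAct.stabilizer_card]
  simp only [Nat.card_eq_fintype_card]

end ColoredEquivs

section Edges

variable {m : ℕ}

theorem Edge.inf_lt_sup (e : Edge m) : e.val.inf < e.val.sup := by
  obtain ⟨⟨x, y⟩, he⟩ := e
  exact _root_.inf_lt_sup.2 he

/-- The endpoints of an edge: `false` selects the smaller one and `true` the larger one. -/
def Edge.endpoint (e : Edge m) (b : Bool) : Fin m :=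
  bif b then e.val.sup else e.val.inf

theorem Edge.endpoint_lt_endpoint_not_iff (e : Edge m) (b : Bool) :
    e.endpoint b < e.endpoint (!b) ↔ b = false := by
  cases b <;> simp [Edge.endpoint, e.inf_lt_sup, e.inf_lt_sup.le]

theorem Edge.endpoint_not_ne (e : Edge m) (b : Bool) : e.endpoint (!b) ≠ e.endpoint b := by
  cases b
  exacts [e.inf_lt_sup.ne', e.inf_lt_sup.ne]

theorem Edge.card_endpoint_eq (e : Edge m) (j : Fin m) :
    Nat.card {b // e.endpoint b = j} = if j ∈ e.val then 1 else 0 := by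
  have hlt := e.inf_lt_sup
  have hmem : j ∈ e.val ↔ e.val.inf = j ∨ e.val.sup = j := by
    obtain ⟨⟨x, y⟩, he⟩ := e
    rcases le_total x y with h | h <;> simp [h, eq_comm, or_comm]
  rw [Nat.card_eq_fintype_card, Fintype.card_subtype, Finset.card_filter, Fintype.sum_bool]
  simp only [Edge.endpoint, cond_true, cond_false, hmem]
  grind

/-- A supply of labelled chords of prescribed type: `p e` of them for each edge `e`. -/
abbrev LabeledChord (p : Edge m → ℕ) : Type := Σ e : Edge m, Fin (p e)

/-- The ends of the labelled chords; the end carrying `false` is the one that goes to the smaller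
endpoint of the edge. -/
abbrev HalfChord (p : Edge m → ℕ) : Type := LabeledChord p × Bool

variable (p : Edge m → ℕ)

/-- The vertex of the complete graph to which an end of a labelled chord belongs. -/
def HalfChord.color (h : HalfChord p) : Fin m :=
  h.1.1.endpoint h.2

/-- The involution exchanging the two ends of every labelled chord. -/
def HalfChord.flip : HalfChord p ≃ HalfChord p :=
  Equiv.prodCongrRight fun _ => Equiv.boolNot

theorem card_labeledChord_fst_eq (e : Edge m) :
    Nat.card {d : LabeledChord p // d.1 = e} = p e := by
  rw [Nat.card_congr (Equiv.sigmaSubtype e), Nat.card_fin]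

theorem card_color_eq_wvec (j : Fin m) :
    Nat.card {h // HalfChord.color p h = j} = wvec p j := by
  have split : {h // HalfChord.color p h = j} ≃
      Σ d : LabeledChord p, {b // d.1.endpoint b = j} :=
    Equiv.subtypeProdEquivSigmaSubtype fun (d : LabeledChord p) b => d.1.endpoint b = j
  rw [Nat.card_congr split, Nat.card_sigma, Fintype.sum_sigma, wvec]
  simp only [Edge.card_endpoint_eq, Finset.sum_const, Finset.card_univ, Fintype.card_fin,
    smul_eq_mul, mul_ite, mul_one, mul_zero]

theorem sum_wvec : ∑ j, wvec p j = 2 * ∑ e, p e := by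
  have h := Nat.card_congr (Equiv.sigmaFiberEquiv (HalfChord.color p))
  simp only [Nat.card_sigma, card_color_eq_wvec, Nat.card_prod] at h
  simpa [mul_comm] using h

end Edges

section Bichromatic

variable {m : ℕ} {V : Type*} (c : V → Fin m) (g : V → V)

/-- A perfect matching `g` of a coloured vertex set that never joins two vertices of the same
colour. -/
structure IsBichromatic : Prop where
  involutive : Function.Involutive g
  color_ne : ∀ x, c (g x) ≠ c x

/-- The endpoints of smaller colour; they represent the chords of a bichromatic matching. -/
abbrev LowerEnd : Type _ := {x : V // c x < c (g x)}

variable {c g} in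
/-- The pair of colours joined by the chord at a lower end. -/
def LowerEnd.edge (x : LowerEnd c g) : Edge m :=
  ⟨s(c x, c (g x)), by simpa using x.2.ne⟩

/-- The number of chords of the matching `g` joining each pair of colours. -/
noncomputable def edgeMult (e : Edge m) : ℕ :=
  Nat.card {x : LowerEnd c g // x.edge = e}

variable {c g}

theorem LowerEnd.edge_eq_iff (x : LowerEnd c g) (e : Edge m) :
    x.edge = e ↔ c x = e.endpoint false ∧ c (g x) = e.endpoint true := by
  have hx : c x ≤ c (g x) := x.2.le
  refine Subtype.ext_iff.trans (Sym2.inf_eq_inf_and_sup_eq_sup.symm.trans ?_)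
  simp [LowerEnd.edge, Edge.endpoint, hx]

/-- The two ends of every chord, `false` selecting the lower one, enumerate the vertices. -/
def IsBichromatic.endsEquiv (hg : IsBichromatic c g) : LowerEnd c g × Bool ≃ V where
  toFun h := bif h.2 then g h.1 else h.1
  invFun x :=
    if hx : c x < c (g x) then (⟨x, hx⟩, false)
    else (⟨g x, by rw [hg.involutive x]; exact (not_lt.1 hx).lt_of_ne (hg.color_ne x)⟩, true)
  left_inv := by
    rintro ⟨x, _ | _⟩
    · simp [x.2]
    · simp [hg.involutive x.1, x.2.le]
  right_inv x := by
    by_cases hx : c x < c (g x) <;> simp [hx, hg.involutive x]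

theorem IsBichromatic.color_endsEquiv (hg : IsBichromatic c g) (h : LowerEnd c g × Bool) :
    c (hg.endsEquiv h) = h.1.edge.endpoint h.2 := by
  have hx := (h.1.edge_eq_iff _).1 rfl
  obtain ⟨x, _ | _⟩ := h
  exacts [hx.1, hx.2]

theorem IsBichromatic.endsEquiv_not (hg : IsBichromatic c g) (x : LowerEnd c g) (b : Bool) :
    hg.endsEquiv (x, !b) = g (hg.endsEquiv (x, b)) := by
  cases b
  exacts [rfl, (hg.involutive _).symm]

variable (c g) {p : Edge m → ℕ}

/-- A labelling of the chords of the matching `g` and of their ends: the labelled ends of a chord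
over the edge `e` are the vertices of the chord coloured by the endpoints of `e`. -/
structure IsLabeling (φ : HalfChord p ≃ V) : Prop where
  color_apply : ∀ h, c (φ h) = HalfChord.color p h
  apply_flip : ∀ h, φ (HalfChord.flip p h) = g (φ h)

variable {c g}

namespace IsLabeling

variable {φ : HalfChord p ≃ V} (hφ : IsLabeling c g φ)
include hφ

theorem color_apply_flip (d : LabeledChord p) (b : Bool) :
    c (g (φ (d, b))) = d.1.endpoint (!b) := by
  rw [← hφ.apply_flip, hφ.color_apply]
  rfl

theorem isBichromatic : IsBichromatic c g where
  involutive x := by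
    obtain ⟨⟨d, b⟩, rfl⟩ := φ.surjective x
    rw [← hφ.apply_flip, ← hφ.apply_flip]
    simp [HalfChord.flip]
  color_ne x := by
    obtain ⟨⟨d, b⟩, rfl⟩ := φ.surjective x
    rw [hφ.color_apply_flip, hφ.color_apply]
    exact d.1.endpoint_not_ne b

theorem color_lt_iff (h : HalfChord p) : c (φ h) < c (g (φ h)) ↔ h.2 = false := by
  rw [hφ.color_apply_flip, hφ.color_apply]
  exact h.1.1.endpoint_lt_endpoint_not_iff h.2

/-- A labelling matches the labelled chords with the lower ends of the chords. -/
def chordEquiv : LabeledChord p ≃ LowerEnd c g where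
  toFun d := ⟨φ (d, false), (hφ.color_lt_iff _).2 rfl⟩
  invFun x := (φ.symm x).1
  left_inv d := by simp
  right_inv x := by
    have hx : (φ.symm x).2 = false := (hφ.color_lt_iff _).1 (by simpa using x.2)
    ext
    simp [← hx]

theorem edge_chordEquiv (d : LabeledChord p) : (hφ.chordEquiv d).edge = d.1 :=
  (LowerEnd.edge_eq_iff _ _).2 ⟨hφ.color_apply _, hφ.color_apply_flip _ _⟩

theorem edgeMult_eq : edgeMult c g = p := by
  funext e
  rw [← card_labeledChord_fst_eq p e]
  exact (Nat.card_congr <| hφ.chordEquiv.subtypeEquiv fun d => by rw [hφ.edge_chordEquiv]).symm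

theorem card_color_eq (j : Fin m) : Nat.card {x // c x = j} = wvec p j := by
  rw [← card_color_eq_wvec]
  exact (Nat.card_congr <| φ.subtypeEquiv fun h => by rw [hφ.color_apply]).symm

end IsLabeling

theorem IsBichromatic.isLabeling (hg : IsBichromatic c g) (ψ : LabeledChord p ≃ LowerEnd c g)
    (hψ : LowerEnd.edge ∘ ψ = Sigma.fst) :
    IsLabeling c g ((ψ.prodCongr (Equiv.refl Bool)).trans hg.endsEquiv) where
  color_apply h := by
    rw [HalfChord.color, ← congrFun hψ h.1]
    exact hg.color_endsEquiv _
  apply_flip h := hg.endsEquiv_not (ψ h.1) h.2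

/-- A labelling amounts to a type-preserving enumeration of the chords. -/
def IsBichromatic.labelingEquiv (hg : IsBichromatic c g) :
    {ψ : LabeledChord p ≃ LowerEnd c g // LowerEnd.edge ∘ ψ = Sigma.fst} ≃
      {φ : HalfChord p ≃ V // IsLabeling c g φ} where
  toFun ψ := ⟨_, hg.isLabeling ψ.1 ψ.2⟩
  invFun φ := ⟨φ.2.chordEquiv, funext φ.2.edge_chordEquiv⟩
  left_inv ψ := by
    ext d
    rfl
  right_inv φ := by
    ext ⟨d, _ | _⟩
    exacts [rfl, (φ.2.apply_flip (d, false)).symm]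

theorem card_fst_eq_card_edge_eq (e : Edge m) :
    Nat.card {d : LabeledChord (edgeMult c g) // d.1 = e} =
      Nat.card {x : LowerEnd c g // x.edge = e} :=
  card_labeledChord_fst_eq _ e

variable [Finite V]

theorem IsBichromatic.exists_isLabeling (hg : IsBichromatic c g) :
    ∃ φ : HalfChord (edgeMult c g) ≃ V, IsLabeling c g φ :=
  let ⟨ψ, hψ⟩ := exists_equiv_comp_eq (card_fst_eq_card_edge_eq (c := c) (g := g))
  ⟨_, hg.isLabeling ψ hψ⟩

theorem IsBichromatic.card_isLabeling (hg : IsBichromatic c g) :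
    Nat.card {φ : HalfChord (edgeMult c g) ≃ V // IsLabeling c g φ} =
      ∏ e, (edgeMult c g e).factorial := by
  rw [← Nat.card_congr hg.labelingEquiv, card_equiv_comp_eq card_fst_eq_card_edge_eq]
  simp only [card_labeledChord_fst_eq]

theorem IsBichromatic.card_color_eq (hg : IsBichromatic c g) (j : Fin m) :
    Nat.card {x // c x = j} = wvec (edgeMult c g) j :=
  let ⟨_, hφ⟩ := hg.exists_isLabeling
  hφ.card_color_eq j

theorem IsBichromatic.two_mul_sum_edgeMult (hg : IsBichromatic c g) :
    2 * ∑ e, edgeMult c g e = Nat.card V := by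
  rw [← sum_wvec, ← Nat.card_congr (Equiv.sigmaFiberEquiv c), Nat.card_sigma]
  simp only [hg.card_color_eq]

/-- Every colour-preserving bijection from the labelled ends is a labelling of exactly one
bichromatic matching, the one transported from `HalfChord.flip`. -/
def colorEquivSigmaLabeling (c : V → Fin m) (p : Edge m → ℕ) :
    {φ : HalfChord p ≃ V // c ∘ φ = HalfChord.color p} ≃
      Σ g : {g : V → V // IsBichromatic c g ∧ edgeMult c g = p},
        {φ : HalfChord p ≃ V // IsLabeling c g.1 φ} where
  toFun φ :=
    have hφ : IsLabeling c (φ.1.conj (HalfChord.flip p)) φ.1 :=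
      ⟨congrFun φ.2, fun h => by simp [Equiv.conj]⟩
    ⟨⟨_, hφ.isBichromatic, hφ.edgeMult_eq⟩, ⟨φ.1, hφ⟩⟩
  invFun x := ⟨x.2.1, funext x.2.2.color_apply⟩
  left_inv _ := rfl
  right_inv := by
    rintro ⟨⟨g, hg⟩, ⟨φ, hφ⟩⟩
    obtain rfl : g = φ.conj (HalfChord.flip p) := by
      funext x
      simp [Equiv.conj, hφ.apply_flip]
    rfl

theorem card_isBichromatic_edgeMult_eq_mul (h : ∀ j, Nat.card {x // c x = j} = wvec p j) :
    Nat.card {g : V → V // IsBichromatic c g ∧ edgeMult c g = p} * ∏ e, (p e).factorial =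
      ∏ j, (wvec p j).factorial := by
  have := Fintype.ofFinite {g : V → V // IsBichromatic c g ∧ edgeMult c g = p}
  have card_labelings (g : {g : V → V // IsBichromatic c g ∧ edgeMult c g = p}) :
      Nat.card {φ : HalfChord p ≃ V // IsLabeling c g.1 φ} = ∏ e, (p e).factorial := by
    obtain ⟨g, hg, rfl⟩ := g
    exact hg.card_isLabeling
  have hcolor (j : Fin m) :
      Nat.card {x // HalfChord.color p x = j} = Nat.card {x // c x = j} := by
    rw [card_color_eq_wvec, h]
  calc
    _ = Nat.card {φ : HalfChord p ≃ V // c ∘ φ = HalfChord.color p} := by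
      rw [Nat.card_congr (colorEquivSigmaLabeling c p), Nat.card_sigma]
      simp [card_labelings]
    _ = ∏ j, (wvec p j).factorial := by
      rw [card_equiv_comp_eq hcolor]
      simp only [card_color_eq_wvec]

open Classical in
theorem card_isBichromatic_edgeMult_eq (c : V → Fin m) (p : Edge m → ℕ) :
    (Nat.card {g : V → V // IsBichromatic c g ∧ edgeMult c g = p} : ℚ) =
      if (fun j => Nat.card {x // c x = j}) = wvec p then
        (∏ j, ((wvec p j).factorial : ℚ)) / ∏ e, ((p e).factorial : ℚ)
      else 0 := by
  split_ifs with h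
  · rw [eq_div_iff (Finset.prod_ne_zero_iff.2 fun e _ => by positivity)]
    exact_mod_cast card_isBichromatic_edgeMult_eq_mul (congrFun h)
  · have : IsEmpty {g : V → V // IsBichromatic c g ∧ edgeMult c g = p} :=
      ⟨fun ⟨g, hg, hp⟩ => h (funext fun j => hp ▸ hg.card_color_eq j)⟩
    simp

theorem card_isBichromatic_eq_sum {N : ℕ} (c : V → Fin m) (hV : Nat.card V = 2 * N) :
    Nat.card {g : V → V // IsBichromatic c g} =
      ∑ p ∈ Finset.univ.piAntidiag N,
        Nat.card {g : V → V // IsBichromatic c g ∧ edgeMult c g = p} := by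
  classical
  have := Fintype.ofFinite V
  have sum_edgeMult : ∀ g ∈ Finset.univ.filter (IsBichromatic c),
      edgeMult c g ∈ Finset.univ.piAntidiag N := fun g hg => by
    have := (Finset.mem_filter.1 hg).2.two_mul_sum_edgeMult
    have hsum : ∑ e, edgeMult c g e = N := by omega
    exact Finset.mem_piAntidiag.2 ⟨hsum, fun _ _ => Finset.mem_univ _⟩
  simp only [Nat.card_eq_fintype_card, Fintype.card_subtype]
  rw [Finset.card_eq_sum_card_fiberwise sum_edgeMult]
  simp only [Finset.filter_filter]

end Bichromatic

section ShortSets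

/-- The sets of left endpoints of `k` disjoint short chords on the vertices `0, …, 2 * n - 1`. -/
structure IsShortSet (n k : ℕ) (S : Finset ℕ) : Prop where
  card_eq : S.card = k
  succ_lt : ∀ s ∈ S, s + 1 < 2 * n
  succ_notMem : ∀ s ∈ S, s + 1 ∉ S

/-- The vertex `x` lies on none of the short chords with left endpoints in `S`. -/
def IsFree (S : Finset ℕ) (x : ℕ) : Prop :=
  x ∉ S ∧ ∀ s ∈ S, s + 1 ≠ x

/-- The vertices of a diagram on `2 * n` points left free by the short chords. -/
abbrev FreeVertex (n : ℕ) (S : Finset ℕ) : Type := {x : Fin (2 * n) // IsFree S x}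

theorem mem_or_succ_or_isFree (S : Finset ℕ) (x : ℕ) :
    x ∈ S ∨ (∃ s ∈ S, s + 1 = x) ∨ IsFree S x := by
  unfold IsFree
  grind

theorem IsFree.of_count_eq {S : Finset ℕ} {x y z : ℕ} (hx : IsFree S x) (hy : IsFree S y)
    (h : Nat.count (· ∈ S) y = Nat.count (· ∈ S) x) (hxz : x ≤ z) (hzy : z ≤ y) :
    IsFree S z ∧ Nat.count (· ∈ S) z = Nat.count (· ∈ S) x := by
  have no_mem {s : ℕ} (hs : s ∈ S) (hxs : x ≤ s) (hsy : s < y) : False :=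
    (((Nat.count_monotone (· ∈ S)) hxs).trans_lt (Nat.count_strict_mono hs hsy)).ne' h
  refine ⟨⟨fun hz => ?_, fun s hs hsz => ?_⟩, ?_⟩
  · exact no_mem hz hxz (hzy.lt_of_ne fun hzy => hy.1 (hzy ▸ hz))
  · have hsx := hx.2 s hs
    exact no_mem hs (by omega) (by omega)
  · exact le_antisymm (h ▸ Nat.count_monotone _ hzy) (Nat.count_monotone _ hxz)

theorem IsFree.count_succ {S : Finset ℕ} {x : ℕ} (hx : IsFree S x) :
    Nat.count (· ∈ S) (x + 1) = Nat.count (· ∈ S) x := by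
  simp [Nat.count_succ, hx.1]

open Classical in
theorem card_freeVertex_lt {n : ℕ} (S : Finset ℕ) {y : ℕ} (hy : y ≤ 2 * n) :
    Nat.card {x : FreeVertex n S // x.1 < y} = Nat.count (IsFree S) y := by
  rw [Nat.count_eq_card_filter_range, ← Nat.subtype_card _ fun _ => Finset.mem_filter]
  exact Nat.card_congr
    { toFun x := ⟨x.1.1, Finset.mem_range.2 x.2, x.1.2⟩
      invFun x := ⟨⟨⟨x, (Finset.mem_range.1 x.2.1).trans_le hy⟩, x.2.2⟩, Finset.mem_range.1 x.2.1⟩ }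

namespace IsShortSet

variable {n k : ℕ} {S : Finset ℕ} (hS : IsShortSet n k S)
include hS

theorem subset_range : S ⊆ Finset.range (2 * n) := fun s hs =>
  Finset.mem_range.2 <| (Nat.lt_succ_self s).trans (hS.succ_lt s hs)

theorem count_two_mul : Nat.count (· ∈ S) (2 * n) = k := by
  rw [Nat.count_eq_card_filter_range, Finset.filter_mem_eq_inter,
    Finset.inter_eq_right.2 hS.subset_range, hS.card_eq]

theorem count_le (x : ℕ) : Nat.count (· ∈ S) x ≤ k := by
  rw [Nat.count_eq_card_filter_range, Finset.filter_mem_eq_inter, ← hS.card_eq]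
  exact Finset.card_le_card Finset.inter_subset_right

open Classical in
theorem count_isFree_add_two_mul_count {y : ℕ} (hy : ∀ s ∈ S, s + 1 ≠ y) :
    Nat.count (IsFree S) y + 2 * Nat.count (· ∈ S) y = y := by
  induction y using Nat.strong_induction_on with
  | _ y ih =>
    obtain _ | y := y
    · simp
    have hyS : y ∉ S := fun h => hy y h rfl
    obtain h | ⟨s, hs, rfl⟩ | hfree := mem_or_succ_or_isFree S y
    · exact absurd h hyS
    · have hsfree : ¬ IsFree S s := fun h => h.1 hs
      have hsfree' : ¬ IsFree S (s + 1) := fun h => h.2 s hs rfl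
      have ihs := ih s (by omega) fun t ht hts => hS.succ_notMem t ht (hts ▸ hs)
      simp only [Nat.count_succ, hs, hyS, hsfree, hsfree', if_true, if_false]
      omega
    · have ihy := ih y (by omega) hfree.2
      simp only [Nat.count_succ, hfree, hyS, if_true, if_false]
      omega

/-- The gaps between consecutive short chords are numbered from left to right; `hS.gap x` is the
number of the gap containing the free vertex `x`. -/
def gap (x : ℕ) : Fin (k + 1) :=
  ⟨Nat.count (· ∈ S) x, Nat.lt_succ_of_le (hS.count_le x)⟩

/-- The colouring of the free vertices by the gap that contains them. -/
def color (x : FreeVertex n S) : Fin (k + 1) :=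
  hS.gap x.1

/-- The number of vertices in each gap. -/
noncomputable def gapSize (j : Fin (k + 1)) : ℕ :=
  Nat.card {x // hS.color x = j}

theorem sum_Iic_gapSize (i : Fin (k + 1)) :
    ∑ j ∈ Finset.Iic i, hS.gapSize j = Nat.card {x // hS.color x ≤ i} := by
  classical
  simp only [gapSize, Nat.card_eq_fintype_card, Fintype.card_subtype]
  rw [Finset.card_eq_sum_card_fiberwise (f := hS.color) (t := Finset.Iic i) (by intro x; simp)]
  refine Finset.sum_congr rfl fun j hj => congrArg Finset.card ?_
  ext x
  simp only [Finset.mem_filter, Finset.mem_univ, true_and, Finset.mem_Iic] at hj ⊢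
  exact ⟨fun h => ⟨h ▸ hj, h⟩, And.right⟩

theorem color_le_gap_iff (x : FreeVertex n S) {y : ℕ} (hy : y ∈ S ∨ y = 2 * n) :
    hS.color x ≤ hS.gap y ↔ x.1 < y := by
  refine ⟨fun h => ?_, fun h => Nat.count_monotone (· ∈ S) h.le⟩
  by_contra! hyx
  rcases hy with hy | rfl
  · have hne : y ≠ x.1 := fun h => x.2.1 (h ▸ hy)
    exact (Nat.count_strict_mono (p := (· ∈ S)) hy (hyx.lt_of_ne hne)).not_ge h
  · exact x.1.2.not_ge hyx

end IsShortSet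

variable {k : ℕ}

/-- If the gaps between `k` short chords have sizes `w 0, …, w k`, then `gapEnd w i` is the first
vertex after the gap `i`, since `i` short chords and the gaps up to `i` precede it. -/
def gapEnd (w : Fin (k + 1) → ℕ) (i : Fin (k + 1)) : ℕ :=
  ∑ j ∈ Finset.Iic i, w j + 2 * i

/-- The left endpoints of the short chords separated by gaps of sizes `w 0, …, w k`. -/
def shortSetOf (w : Fin (k + 1) → ℕ) : Finset ℕ :=
  Finset.univ.image (gapEnd w ∘ Fin.castSucc)

theorem mem_shortSetOf {w : Fin (k + 1) → ℕ} {s : ℕ} :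
    s ∈ shortSetOf w ↔ ∃ i : Fin k, gapEnd w i.castSucc = s := by
  simp [shortSetOf]

theorem gapEnd_add_two_le (w : Fin (k + 1) → ℕ) {i j : Fin (k + 1)} (h : i < j) :
    gapEnd w i + 2 ≤ gapEnd w j := by
  have hsum : ∑ l ∈ Finset.Iic i, w l ≤ ∑ l ∈ Finset.Iic j, w l :=
    Finset.sum_le_sum_of_subset (Finset.Iic_subset_Iic.2 h.le)
  have : i.val < j.val := h
  unfold gapEnd
  omega

theorem gapEnd_strictMono (w : Fin (k + 1) → ℕ) : StrictMono (gapEnd w) := fun _ _ h => by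
  have := gapEnd_add_two_le w h
  omega

theorem gapEnd_last (w : Fin (k + 1) → ℕ) : gapEnd w (Fin.last k) = ∑ j, w j + 2 * k := by
  rw [gapEnd, ← Fin.top_eq_last, Finset.Iic_top]
  rfl

theorem gapEnd_comp_castSucc_injective (w : Fin (k + 1) → ℕ) :
    Function.Injective (gapEnd w ∘ Fin.castSucc) :=
  ((gapEnd_strictMono w).comp Fin.strictMono_castSucc).injective

theorem card_shortSetOf (w : Fin (k + 1) → ℕ) : (shortSetOf w).card = k := by
  rw [shortSetOf, Finset.card_image_of_injective _ (gapEnd_comp_castSucc_injective w),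
    Finset.card_fin]

theorem count_shortSetOf_gapEnd (w : Fin (k + 1) → ℕ) (i : Fin (k + 1)) :
    Nat.count (· ∈ shortSetOf w) (gapEnd w i) = i := by
  have hbelow : (Finset.range (gapEnd w i)).filter (· ∈ shortSetOf w) =
      (Finset.univ.filter fun j : Fin k => j.val < i.val).image (gapEnd w ∘ Fin.castSucc) := by
    ext s
    simp only [mem_shortSetOf, Finset.mem_filter, Finset.mem_range, Finset.mem_image,
      Finset.mem_univ, true_and, Function.comp_apply]
    constructor
    · rintro ⟨hs, j, rfl⟩
      exact ⟨j, (gapEnd_strictMono w).lt_iff_lt.1 hs, rfl⟩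
    · rintro ⟨j, hj, rfl⟩
      exact ⟨gapEnd_strictMono w hj, j, rfl⟩
  rw [Nat.count_eq_card_filter_range, hbelow,
    Finset.card_image_of_injective _ (gapEnd_comp_castSucc_injective w),
    Fin.card_filter_val_lt, min_eq_right (Nat.lt_succ_iff.1 i.2)]

theorem isShortSet_shortSetOf {n : ℕ} {w : Fin (k + 1) → ℕ} (hw : ∑ j, w j + 2 * k = 2 * n) :
    IsShortSet n k (shortSetOf w) where
  card_eq := card_shortSetOf w
  succ_lt s hs := by
    obtain ⟨i, rfl⟩ := mem_shortSetOf.1 hs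
    have := gapEnd_add_two_le w i.castSucc_lt_last
    rw [gapEnd_last] at this
    omega
  succ_notMem s hs hs' := by
    obtain ⟨i, rfl⟩ := mem_shortSetOf.1 hs
    obtain ⟨j, hj⟩ := mem_shortSetOf.1 hs'
    have hij : i.castSucc < j.castSucc := (gapEnd_strictMono w).lt_iff_lt.1 (by omega)
    have := gapEnd_add_two_le w hij
    omega

namespace IsShortSet

variable {n : ℕ} {S : Finset ℕ} (hS : IsShortSet n k S)
include hS

theorem gapEnd_gapSize_gap {y : ℕ} (hy : y ∈ S ∨ y = 2 * n) :
    gapEnd hS.gapSize (hS.gap y) = y := by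
  classical
  have hy_le : y ≤ 2 * n := by
    rcases hy with hy | rfl
    · have := hS.succ_lt y hy
      omega
    · rfl
  have hy_ne : ∀ s ∈ S, s + 1 ≠ y := by
    rintro s hs rfl
    exact hy.elim (hS.succ_notMem s hs) (hS.succ_lt s hs).ne
  simp only [gapEnd, sum_Iic_gapSize, hS.color_le_gap_iff _ hy, card_freeVertex_lt S hy_le]
  exact hS.count_isFree_add_two_mul_count hy_ne

theorem sum_gapSize : ∑ j, hS.gapSize j + 2 * k = 2 * n := by
  have hgap : hS.gap (2 * n) = Fin.last k := Fin.ext hS.count_two_mul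
  rw [← gapEnd_last, ← hgap]
  exact hS.gapEnd_gapSize_gap (Or.inr rfl)

theorem card_freeVertex : Nat.card (FreeVertex n S) = 2 * (n - k) := by
  have h := Nat.card_congr (Equiv.sigmaFiberEquiv hS.color)
  have hsum := hS.sum_gapSize
  simp only [Nat.card_sigma, gapSize] at h hsum
  omega

theorem eq_shortSetOf_gapSize : S = shortSetOf hS.gapSize := by
  refine Finset.eq_of_subset_of_card_le (fun s hs => ?_)
    ((card_shortSetOf _).trans_le hS.card_eq.ge)
  have hlt : Nat.count (· ∈ S) s < k := by
    rw [← hS.count_two_mul]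
    exact Nat.count_strict_mono hs (Finset.mem_range.1 (hS.subset_range hs))
  exact mem_shortSetOf.2 ⟨⟨_, hlt⟩, hS.gapEnd_gapSize_gap (Or.inl hs)⟩

end IsShortSet

theorem gapSize_shortSetOf {n : ℕ} {w : Fin (k + 1) → ℕ} (hw : ∑ j, w j + 2 * k = 2 * n) :
    (isShortSet_shortSetOf hw).gapSize = w := by
  set hT := isShortSet_shortSetOf hw
  refine eq_of_sum_Iic_eq fun i => ?_
  have hgap : hT.gap (gapEnd w i) = i := Fin.ext (count_shortSetOf_gapEnd w i)
  have hmem : gapEnd w i ∈ shortSetOf w ∨ gapEnd w i = 2 * n := by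
    induction i using Fin.lastCases with
    | last => exact Or.inr ((gapEnd_last w).trans hw)
    | cast i => exact Or.inl (mem_shortSetOf.2 ⟨i, rfl⟩)
  have hend := hT.gapEnd_gapSize_gap hmem
  rw [hgap] at hend
  exact Nat.add_right_cancel hend

theorem IsShortSet.gapSize_eq_iff {n : ℕ} {S : Finset ℕ} (hS : IsShortSet n k S)
    {w : Fin (k + 1) → ℕ} (hw : ∑ j, w j + 2 * k = 2 * n) :
    hS.gapSize = w ↔ S = shortSetOf w := by
  constructor
  · rintro rfl
    exact hS.eq_shortSetOf_gapSize
  · rintro rfl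
    exact gapSize_shortSetOf hw

end ShortSets

section Diagrams

variable {n k : ℕ} {f : Equiv.Perm (Fin (2 * n))}

/-- The left endpoints of the short chords of a diagram. -/
def shortSet (f : Equiv.Perm (Fin (2 * n))) : Finset ℕ :=
  (Finset.univ.filter fun i => (f i).val = i.val + 1).map Fin.valEmbedding

theorem val_mem_shortSet {i : Fin (2 * n)} : i.val ∈ shortSet f ↔ (f i).val = i.val + 1 := by
  simp [shortSet, ← Fin.ext_iff]

theorem exists_of_mem_shortSet {s : ℕ} (hs : s ∈ shortSet f) :
    ∃ i : Fin (2 * n), i.val = s ∧ (f i).val = s + 1 := by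
  obtain ⟨i, hi, rfl⟩ := Finset.mem_map.1 hs
  exact ⟨i, rfl, (Finset.mem_filter.1 hi).2⟩

theorem card_shortSet (f : Equiv.Perm (Fin (2 * n))) : (shortSet f).card = shortChords n f := by
  rw [shortSet, Finset.card_map, shortChords, Nat.card_eq_fintype_card, Fintype.card_subtype]

namespace IsDiagram

variable (hf : IsDiagram n f)
include hf

theorem isShortSet_shortSet (hk : shortChords n f = k) : IsShortSet n k (shortSet f) where
  card_eq := (card_shortSet f).trans hk
  succ_lt s hs := by
    obtain ⟨i, -, hi⟩ := exists_of_mem_shortSet hs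
    exact hi ▸ (f i).2
  succ_notMem s hs hs' := by
    obtain ⟨i, rfl, hi⟩ := exists_of_mem_shortSet hs
    rw [← hi, val_mem_shortSet, hf.1] at hs'
    omega

theorem isFree_shortSet_iff (i : Fin (2 * n)) : IsFree (shortSet f) i ↔ ¬ ShortEnd n f i := by
  rw [IsFree, ShortEnd, val_mem_shortSet, not_or]
  refine and_congr_right fun _ => ⟨fun h hi => h (f i) ?_ hi, fun h s hs hsi => h ?_⟩
  · rw [val_mem_shortSet, hf.1, hi]
  · obtain ⟨j, rfl, hj⟩ := exists_of_mem_shortSet hs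
    have hji : f j = i := Fin.ext (hj.trans hsi)
    rw [← hji, hf.1, hj]

theorem isFree_apply {i : Fin (2 * n)} (hi : IsFree (shortSet f) i) :
    IsFree (shortSet f) (f i) := by
  rw [hf.isFree_shortSet_iff] at hi ⊢
  unfold ShortEnd at hi ⊢
  rw [hf.1]
  omega

theorem exists_isBubble {x : Fin (2 * n)} (hx : IsFree (shortSet f) x) :
    ∃ a b, IsBubble n f a b ∧ ∀ y : Fin (2 * n), IsFree (shortSet f) y →
      Nat.count (· ∈ shortSet f) y = Nat.count (· ∈ shortSet f) x → a ≤ y.val ∧ y.val ≤ b := by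
  classical
  set S := shortSet f
  let gapOfX : Finset (Fin (2 * n)) := Finset.univ.filter fun y =>
    IsFree S y ∧ Nat.count (· ∈ S) y = Nat.count (· ∈ S) x
  have mem_gap {y : Fin (2 * n)} :
      y ∈ gapOfX ↔ IsFree S y ∧ Nat.count (· ∈ S) y = Nat.count (· ∈ S) x := by
    simp [gapOfX]
  have nonempty : gapOfX.Nonempty := ⟨x, mem_gap.2 ⟨hx, rfl⟩⟩
  obtain ⟨a, ha, ha_le⟩ := gapOfX.exists_min_image id nonempty
  obtain ⟨b, hb, le_hb⟩ := gapOfX.exists_max_image id nonempty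
  obtain ⟨ha_free, ha_count⟩ := mem_gap.1 ha
  obtain ⟨hb_free, hb_count⟩ := mem_gap.1 hb
  refine ⟨a, b, ⟨ha_le b hb, b.2, fun i hai hib => ?_, ?_, ?_⟩, fun y hy hyx =>
    ⟨ha_le y (mem_gap.2 ⟨hy, hyx⟩), le_hb y (mem_gap.2 ⟨hy, hyx⟩)⟩⟩
  · rw [← hf.isFree_shortSet_iff]
    exact (ha_free.of_count_eq hb_free (hb_count.trans ha_count.symm) hai hib).1
  · refine or_iff_not_imp_left.2 fun ha_ne => ?_
    obtain ⟨c, hc⟩ := Nat.exists_eq_succ_of_ne_zero ha_ne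
    have hcn : c < 2 * n := by omega
    refine ⟨⟨c, hcn⟩, hc.symm, by_contra fun hshort => ?_⟩
    have hc_free : IsFree S c := (hf.isFree_shortSet_iff ⟨c, hcn⟩).2 hshort
    have hac : a.val ≤ c := ha_le ⟨c, hcn⟩ <| mem_gap.2
      ⟨hc_free, by rw [← ha_count, hc, hc_free.count_succ]⟩
    omega
  · refine or_iff_not_imp_left.2 fun hb_ne => ?_
    have hbn : b.val + 1 < 2 * n := by omega
    refine ⟨⟨b + 1, hbn⟩, rfl, by_contra fun hshort => ?_⟩
    have hb'_free : IsFree S (b + 1) := (hf.isFree_shortSet_iff ⟨b + 1, hbn⟩).2 hshort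
    have hbb : b.val + 1 ≤ b := le_hb ⟨b + 1, hbn⟩ <| mem_gap.2
      ⟨hb'_free, by rw [← hb_count, hb_free.count_succ]⟩
    omega

end IsDiagram

theorem IsBubble.count_eq {a b i : ℕ} (hB : IsBubble n f a b) (hai : a ≤ i) (hib : i ≤ b) :
    Nat.count (· ∈ shortSet f) i = Nat.count (· ∈ shortSet f) a := by
  refine (Nat.count_monotone _ hai).eq_of_not_lt' fun hlt => ?_
  obtain ⟨s, ⟨has, hsi⟩, hs⟩ := Nat.exists_of_count_lt_count hlt
  obtain ⟨j, rfl, hj⟩ := exists_of_mem_shortSet hs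
  exact hB.2.2.1 j has (hsi.le.trans hib) (Or.inl hj)

theorem IsDiagram.crystallized_iff (hf : IsDiagram n f) :
    Crystallized n f ↔ ∀ x : Fin (2 * n), IsFree (shortSet f) x →
      Nat.count (· ∈ shortSet f) (f x) ≠ Nat.count (· ∈ shortSet f) x := by
  constructor
  · intro hC x hx hcount
    obtain ⟨a, b, hB, hgap⟩ := hf.exists_isBubble hx
    obtain ⟨hax, hxb⟩ := hgap x hx rfl
    exact hC a b hB x hax hxb (hgap (f x) (hf.isFree_apply hx) hcount)
  · rintro h a b hB x hax hxb ⟨hafx, hfxb⟩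
    exact h x ((hf.isFree_shortSet_iff x).2 (hB.2.2.1 x hax hxb))
      ((hB.count_eq hafx hfxb).trans (hB.count_eq hax hxb).symm)

namespace IsShortSet

variable {S : Finset ℕ} (hS : IsShortSet n k S) {g : FreeVertex n S → FreeVertex n S}

open Classical in
/-- The map on all vertices that agrees with `g` on the free ones and exchanges the two endpoints of
each short chord. -/
noncomputable def extend (g : FreeVertex n S → FreeVertex n S) (x : Fin (2 * n)) : Fin (2 * n) :=
  if hfree : IsFree S x then g ⟨x, hfree⟩
  else if hx : x.val ∈ S then ⟨x + 1, hS.succ_lt x hx⟩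
  else ⟨x - 1, by omega⟩

theorem extend_of_isFree {x : Fin (2 * n)} (hx : IsFree S x) : hS.extend g x = g ⟨x, hx⟩ :=
  dif_pos hx

theorem val_extend_of_mem {x : Fin (2 * n)} (hx : x.val ∈ S) :
    (hS.extend g x).val = x.val + 1 := by
  rw [extend, dif_neg fun h => h.1 hx, dif_pos hx]

theorem val_extend_of_pred_mem {x : Fin (2 * n)} {s : ℕ} (hs : s ∈ S) (hsx : s + 1 = x.val) :
    (hS.extend g x).val = s := by
  have hx : x.val ∉ S := hsx ▸ hS.succ_notMem s hs
  rw [extend, dif_neg fun h => h.2 s hs hsx, dif_neg hx]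
  exact (Nat.eq_sub_of_add_eq hsx).symm

theorem involutive_extend (hg : Function.Involutive g) : Function.Involutive (hS.extend g) := by
  intro x
  obtain hx | ⟨s, hs, hsx⟩ | hx := mem_or_succ_or_isFree S x
  · exact Fin.ext (hS.val_extend_of_pred_mem hx (hS.val_extend_of_mem hx).symm)
  · have hval := hS.val_extend_of_pred_mem (g := g) hs hsx
    exact Fin.ext <| (hS.val_extend_of_mem (hval.symm ▸ hs)).trans (hval ▸ hsx)
  · rw [hS.extend_of_isFree hx, hS.extend_of_isFree (g ⟨x, hx⟩).2, hg]

noncomputable def extendPerm (hg : Function.Involutive g) : Equiv.Perm (Fin (2 * n)) :=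
  (hS.involutive_extend hg).toPerm

theorem color_eq_iff {x y : FreeVertex n S} :
    hS.color x = hS.color y ↔ Nat.count (· ∈ S) x.1 = Nat.count (· ∈ S) y.1 :=
  Fin.ext_iff

theorem isDiagram_extendPerm (hg : IsBichromatic hS.color g) :
    IsDiagram n (hS.extendPerm hg.involutive) := by
  refine ⟨hS.involutive_extend hg.involutive, fun x hfix => ?_⟩
  replace hfix : hS.extend g x = x := hfix
  obtain hx | ⟨s, hs, hsx⟩ | hx := mem_or_succ_or_isFree S x
  · have := hS.val_extend_of_mem (g := g) hx
    omega
  · have := hS.val_extend_of_pred_mem (g := g) hs hsx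
    omega
  · rw [hS.extend_of_isFree hx] at hfix
    exact hg.color_ne ⟨x, hx⟩ (congrArg hS.color (Subtype.ext hfix))

theorem shortSet_extendPerm (hg : IsBichromatic hS.color g) :
    shortSet (hS.extendPerm hg.involutive) = S := by
  refine Finset.Subset.antisymm (fun s hs => ?_) fun s hs => ?_
  · obtain ⟨x, rfl, hx_succ⟩ := exists_of_mem_shortSet hs
    replace hx_succ : (hS.extend g x).val = x.val + 1 := hx_succ
    obtain hx | ⟨s, hs, hsx⟩ | hx := mem_or_succ_or_isFree S x
    · exact hx
    · have := hS.val_extend_of_pred_mem (g := g) hs hsx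
      omega
    · rw [hS.extend_of_isFree hx] at hx_succ
      refine absurd (hS.color_eq_iff.2 ?_) (hg.color_ne ⟨x, hx⟩)
      rw [hx_succ, hx.count_succ]
  · have hs_lt : s < 2 * n := Finset.mem_range.1 (hS.subset_range hs)
    exact (val_mem_shortSet (i := ⟨s, hs_lt⟩)).2 (hS.val_extend_of_mem hs)

end IsShortSet

namespace IsDiagram

variable {S : Finset ℕ} (hf : IsDiagram n f) (hfS : shortSet f = S)

/-- The involution that a diagram with short chords `S` induces on its free vertices. -/
def restrict (x : FreeVertex n S) : FreeVertex n S :=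
  ⟨f x.1, by
    subst hfS
    exact hf.isFree_apply x.2⟩

theorem involutive_restrict : Function.Involutive (hf.restrict hfS) := fun x =>
  Subtype.ext (hf.1 x.1)

theorem isBichromatic_restrict_iff (hS : IsShortSet n k S) :
    IsBichromatic hS.color (hf.restrict hfS) ↔ Crystallized n f := by
  rw [hf.crystallized_iff, hfS]
  exact ⟨fun h x hx hcount => h.color_ne ⟨x, hx⟩ (hS.color_eq_iff.2 hcount), fun h =>
    ⟨hf.involutive_restrict hfS, fun x hcolor => h x.1 x.2 (hS.color_eq_iff.1 hcolor)⟩⟩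

theorem extendPerm_restrict (hS : IsShortSet n k S) :
    hS.extendPerm (hf.involutive_restrict hfS) = f := by
  ext x : 1
  change hS.extend (hf.restrict hfS) x = f x
  obtain hx | ⟨s, hs, hsx⟩ | hx := mem_or_succ_or_isFree S x
  · rw [Fin.ext_iff, hS.val_extend_of_mem hx]
    exact (val_mem_shortSet.1 (hfS.symm ▸ hx)).symm
  · obtain ⟨y, rfl, hy⟩ := exists_of_mem_shortSet (hfS.symm ▸ hs)
    have hyx : f y = x := Fin.ext (hy.trans hsx)
    rw [Fin.ext_iff, hS.val_extend_of_pred_mem hs hsx, ← hyx, hf.1]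
  · rw [hS.extend_of_isFree hx]
    rfl

end IsDiagram

namespace IsShortSet

variable {S : Finset ℕ} (hS : IsShortSet n k S) {g : FreeVertex n S → FreeVertex n S}

theorem restrict_extendPerm (hg : IsBichromatic hS.color g) :
    (hS.isDiagram_extendPerm hg).restrict (hS.shortSet_extendPerm hg) = g :=
  funext fun x => Subtype.ext (hS.extend_of_isFree x.2)

theorem crystallized_extendPerm (hg : IsBichromatic hS.color g) :
    Crystallized n (hS.extendPerm hg.involutive) := by
  rw [← (hS.isDiagram_extendPerm hg).isBichromatic_restrict_iff (hS.shortSet_extendPerm hg) hS,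
    hS.restrict_extendPerm hg]
  exact hg

/-- Crystallized diagrams with a prescribed set of short chords are the involutions of the free
vertices that send no vertex to its own gap. -/
noncomputable def diagramEquiv :
    {f : Equiv.Perm (Fin (2 * n)) //
      (IsDiagram n f ∧ Crystallized n f ∧ shortChords n f = k) ∧ shortSet f = S} ≃
    {g : FreeVertex n S → FreeVertex n S // IsBichromatic hS.color g} where
  toFun f := ⟨f.2.1.1.restrict f.2.2, (f.2.1.1.isBichromatic_restrict_iff f.2.2 hS).2 f.2.1.2.1⟩
  invFun g := ⟨hS.extendPerm g.2.involutive,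
    ⟨hS.isDiagram_extendPerm g.2, hS.crystallized_extendPerm g.2, by
      rw [← card_shortSet, hS.shortSet_extendPerm g.2, hS.card_eq]⟩,
    hS.shortSet_extendPerm g.2⟩
  left_inv f := Subtype.ext (f.2.1.1.extendPerm_restrict f.2.2 hS)
  right_inv g := Subtype.ext (hS.restrict_extendPerm g.2)

end IsShortSet

/-- Crystallized diagrams grouped by their set of short chords. -/
noncomputable def crystallizedEquivSigma (n k : ℕ) :
    {f : Equiv.Perm (Fin (2 * n)) // IsDiagram n f ∧ Crystallized n f ∧ shortChords n f = k} ≃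
      Σ S : {S : Finset ℕ // IsShortSet n k S}, {g // IsBichromatic S.2.color g} :=
  (Equiv.sigmaFiberEquiv fun f => ⟨shortSet f.1, f.2.1.isShortSet_shortSet f.2.2.2⟩).symm.trans <|
    Equiv.sigmaCongrRight fun S => (Equiv.subtypeEquivRight fun _ => Subtype.ext_iff).trans <|
      (Equiv.subtypeSubtypeEquivSubtypeInter _ fun f => shortSet f = S.1).trans S.2.diagramEquiv

end Diagrams

section Count

instance (n k : ℕ) : Finite {S : Finset ℕ // IsShortSet n k S} :=
  ((Finset.range (2 * n)).powerset.finite_toSet.subset fun _ hS =>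
    Finset.mem_coe.2 (Finset.mem_powerset.2 hS.subset_range)).to_subtype

noncomputable instance (n k : ℕ) : Fintype {S : Finset ℕ // IsShortSet n k S} :=
  Fintype.ofFinite _

theorem R_eq_sum_card_isBichromatic (n k : ℕ) :
    R n k = ∑ S : {S : Finset ℕ // IsShortSet n k S},
      Nat.card {g // IsBichromatic S.2.color g} := by
  rw [R, Nat.card_congr (crystallizedEquivSigma n k), Nat.card_sigma]

theorem sum_card_isBichromatic_edgeMult_eq {n k : ℕ} (hn : k ≤ n) {p : Edge (k + 1) → ℕ}
    (hp : ∑ e, p e = n - k) :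
    ∑ S : {S : Finset ℕ // IsShortSet n k S},
        (Nat.card {g // IsBichromatic S.2.color g ∧ edgeMult S.2.color g = p} : ℚ) =
      (∏ j, ((wvec p j).factorial : ℚ)) / ∏ e, ((p e).factorial : ℚ) := by
  classical
  have hw : ∑ j, wvec p j + 2 * k = 2 * n := by
    rw [sum_wvec, hp]
    omega
  have gapSize_eq_iff (S : {S : Finset ℕ // IsShortSet n k S}) :
      (fun j => Nat.card {x // S.2.color x = j}) = wvec p ↔
        S = ⟨shortSetOf (wvec p), isShortSet_shortSetOf hw⟩ := by
    rw [Subtype.ext_iff]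
    exact S.2.gapSize_eq_iff hw
  simp only [card_isBichromatic_edgeMult_eq, gapSize_eq_iff, Finset.sum_ite_eq', Finset.mem_univ,
    if_true]

end Count

/-- `R n k` equals the sum, over all assignments `p` of nonnegative integers to the edges of the
complete graph `K_{k+1}` with total sum `n - k`, of `(∏ⱼ wⱼ!) / (∏ᵢ pᵢ!)` where `w = B p` with
`B` the incidence matrix of `K_{k+1}`. -/
theorem R_eq_sum_multinomial (n k : ℕ) (hk : 1 ≤ k) (hn : k ≤ n) :
    (R n k : ℚ) =
      ∑ p ∈ (Fintype.piFinset fun _ : Edge (k + 1) => Finset.range (n - k + 1)).filter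
          (fun p => ∑ e, p e = n - k),
        (∏ j : Fin (k + 1), (Nat.factorial (wvec p j) : ℚ)) /
        (∏ e : Edge (k + 1), (Nat.factorial (p e) : ℚ)) := by
  calc
    (R n k : ℚ)
    _ = ∑ S : {S : Finset ℕ // IsShortSet n k S}, ∑ p ∈ Finset.univ.piAntidiag (n - k),
          (Nat.card {g // IsBichromatic S.2.color g ∧ edgeMult S.2.color g = p} : ℚ) := by
      rw [R_eq_sum_card_isBichromatic]
      push_cast
      refine Finset.sum_congr rfl fun S _ => ?_
      exact_mod_cast card_isBichromatic_eq_sum S.2.color S.2.card_freeVertex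
    _ = ∑ p ∈ Finset.univ.piAntidiag (n - k),
          (∏ j, ((wvec p j).factorial : ℚ)) / ∏ e, ((p e).factorial : ℚ) := by
      rw [Finset.sum_comm]
      exact Finset.sum_congr rfl fun p hp =>
        sum_card_isBichromatic_edgeMult_eq hn (Finset.mem_piAntidiag.1 hp).1
    _ = _ := by rw [filter_piFinset_range_sum_eq]

end ChordBubbles
end
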